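/- arXiv:1609.03914 — 2 statements merged into one kernel-verified Lean document; each statement's English description precedes it below -/
import Mathlib

section
/- Under Assumption B, the Hausdorff dimension of the attractor and of the self-affine measure satisfy dim_H(Λ) = dim_H(ν) = min(2, 1 + log(Nc)/(−log b)). -/
open MeasureTheory Filter Set Topology
open scoped ENNReal

noncomputable section

/-- One triangular affine map `S_i(x,y) = (c x + u_i, d_i x + b y + v_i)`. -/
def Smap {N : ℕ} (c b : ℝ) (u v d : Fin N → ℝ) (i : Fin N) (p : ℝ × ℝ) : ℝ × ℝ :=
  (c * p.1 + u i, d i * p.1 + b * p.2 + v i)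

/-- Composition along a finite word: `Sword [i₁,…,iₙ] = S_{i₁} ∘ ⋯ ∘ S_{iₙ}`. -/
def Sword {N : ℕ} (c b : ℝ) (u v d : Fin N → ℝ) : List (Fin N) → (ℝ × ℝ) → ℝ × ℝ
  | [] => id
  | i :: w => Smap c b u v d i ∘ Sword c b u v d w

/-- The closed unit square `[0,1]²`. -/
def unitSq : Set (ℝ × ℝ) := Set.Icc 0 1 ×ˢ Set.Icc 0 1

/-- The length-`n` prefix of an infinite word, as a list. -/
def prefixWord {N : ℕ} (i : ℕ → Fin N) (n : ℕ) : List (Fin N) :=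
  List.ofFn (fun k : Fin n => i k)

/-- The transversality condition: there is `c₃ > 0` such that for every `n` and all
`𝐢, 𝐣` with different first symbols, the projection to the `x`-axis of the intersection
of the two level-`n` cylinder parallelograms has diameter `< c₃ bⁿ`. -/
def Transversality (N : ℕ) (c b : ℝ) (u v d : Fin N → ℝ) : Prop :=
  ∃ c₃ > (0 : ℝ), ∀ (n : ℕ) (i j : ℕ → Fin N), i 0 ≠ j 0 →
    Metric.diam (Prod.fst '' (Sword c b u v d (prefixWord i n) '' unitSq ∩
      Sword c b u v d (prefixWord j n) '' unitSq)) < c₃ * b ^ n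

/-- `μ` is the uniform Bernoulli measure `(1/N,…,1/N)^ℕ` on the symbolic space. -/
def IsUniformBernoulli (N : ℕ) (μ : Measure (ℕ → Fin N)) : Prop :=
  IsProbabilityMeasure μ ∧ ∀ (n : ℕ) (w : Fin n → Fin N),
    μ {x | ∀ k : Fin n, x (k : ℕ) = w k} = (1 / (N : ℝ≥0∞)) ^ n

/-- `m` is absolutely continuous w.r.t. Lebesgue measure with an `L^q` density. -/
def HasLqDensity (m : Measure ℝ) (q : ℝ) : Prop :=
  ∃ φ : ℝ → ℝ≥0∞, m = MeasureTheory.volume.withDensity φ ∧ (∫⁻ t, φ t ^ q) < ⊤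

/-- The Hausdorff dimension of a measure: the infimum of Hausdorff dimensions
of sets of full measure. -/
def measureDimH {X : Type*} [EMetricSpace X] [MeasurableSpace X] (m : Measure X) : ℝ≥0∞ :=
  ⨅ (A : Set X) (_ : m Aᶜ = 0), dimH A

/-!
The upper bound comes from the natural cover: cutting the `Nⁿ` level-`n` parallelograms, of
width `cⁿ` and vertical fibres of length `bⁿ`, into about `(c / b)ⁿ` pieces each gives
`(N c)ⁿ b⁻ⁿ` sets of diameter comparable to `bⁿ`.

For the lower bound, let `Pₙ` be the `μ × μ` measure of the pairs of codes whose points are within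
`bⁿ` of each other. Sorting such pairs by their common prefix reduces `Pₙ` to pairs with distinct
first letters. For these, transversality confines the intersection of two parallelograms to a strip
of width comparable to `bᵐ`, and the Frostman bounds supplied by the `L^q` densities of the
projection make the measure of the pair of strips almost as small as `b²ᵐ`. This closes a
self-improving estimate for `Pₙ`, at the price that parallelograms near the boundary of the square
must be excluded: some word `w` maps the attractor well inside the square, and almost every code
meets `w` within every window of length `ζ n`. Hence, up to subexponential factors, `Pₙ` decays
like `(bⁿ)^s` with `s = min 2 (1 + τ)`, `b ^ τ = 1 / (N c)`, and Markov's inequality, the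
Borel–Cantelli lemma and the mass distribution principle turn this into the lower bound for the
dimension of every set of full measure.
-/

/-! ### Words and their affine maps -/

section Words

variable {α : Type*} {m n : ℕ} {i j : ℕ → α}

/-- The shift `σᵐ` on infinite words. -/
def wordShift (m : ℕ) (i : ℕ → α) : ℕ → α := fun k => i (k + m)

/-- The first `m` letters of an infinite word, indexed by `Fin m`; `prefixWord` is the same
word as a list. -/
def wordPrefix (m : ℕ) (i : ℕ → α) : Fin m → α := fun k => i k

theorem wordShift_wordShift (m n : ℕ) (i : ℕ → α) :
    wordShift m (wordShift n i) = wordShift (m + n) i := by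
  funext k
  simp only [wordShift, add_assoc]

theorem wordPrefix_eq_iff : wordPrefix m i = wordPrefix m j ↔ ∀ k < m, i k = j k := by
  simp only [funext_iff, wordPrefix, Fin.forall_iff]

theorem wordPrefix_eq_of_le (hmn : m ≤ n) (h : wordPrefix n i = wordPrefix n j) :
    wordPrefix m i = wordPrefix m j :=
  wordPrefix_eq_iff.2 fun k hk => wordPrefix_eq_iff.1 h k (hk.trans_le hmn)

end Words

section WordMaps

variable {N : ℕ} {b c : ℝ} {u v d : Fin N → ℝ}

theorem length_prefixWord (i : ℕ → Fin N) (n : ℕ) : (prefixWord i n).length = n :=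
  List.length_ofFn

theorem prefixWord_succ (i : ℕ → Fin N) (n : ℕ) :
    prefixWord i (n + 1) = i 0 :: prefixWord (wordShift 1 i) n := by
  simp [prefixWord, wordShift, List.ofFn_succ]

theorem prefixWord_congr {i j : ℕ → Fin N} {n : ℕ} (h : wordPrefix n i = wordPrefix n j) :
    prefixWord i n = prefixWord j n :=
  congrArg List.ofFn h

/-- The lower left entry of the linear part of `Sword c b u v d w`. -/
def shear (b c : ℝ) (d : Fin N → ℝ) : List (Fin N) → ℝ
  | [] => 0
  | i :: w => d i * c ^ w.length + b * shear b c d w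

/-- The constant `σ` for which the shear of a word of length `m` is at most `σ cᵐ`. -/
def shearBound (b c : ℝ) (d : Fin N → ℝ) : ℝ := (∑ i, |d i|) / (c - b)

theorem Sword_fst_sub (w : List (Fin N)) (p q : ℝ × ℝ) :
    (Sword c b u v d w p).1 - (Sword c b u v d w q).1 = c ^ w.length * (p.1 - q.1) := by
  induction w with
  | nil => simp [Sword]
  | cons i w ih =>
    simp only [Sword, Function.comp_apply, Smap, List.length_cons]
    linear_combination c * ih

theorem Sword_snd_sub (w : List (Fin N)) (p q : ℝ × ℝ) :
    (Sword c b u v d w p).2 - (Sword c b u v d w q).2 =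
      shear b c d w * (p.1 - q.1) + b ^ w.length * (p.2 - q.2) := by
  induction w with
  | nil => simp [Sword, shear]
  | cons i w ih =>
    have hfst := Sword_fst_sub (c := c) (b := b) (u := u) (v := v) (d := d) w p q
    simp only [Sword, Function.comp_apply, Smap, List.length_cons, shear]
    linear_combination b * ih + d i * hfst

theorem shearBound_nonneg (hbc : b < c) : 0 ≤ shearBound b c d :=
  div_nonneg (Finset.sum_nonneg fun _ _ => abs_nonneg _) (sub_nonneg.2 hbc.le)

theorem abs_shear_le (hb : 0 < b) (hbc : b < c) (w : List (Fin N)) :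
    |shear b c d w| ≤ shearBound b c d * c ^ w.length := by
  have hc : 0 < c := hb.trans hbc
  -- `σ (cᵐ - bᵐ)` is the bound that the recursion for the shear reproduces.
  suffices h : |shear b c d w| ≤ shearBound b c d * (c ^ w.length - b ^ w.length) by
    have := mul_nonneg (shearBound_nonneg (d := d) hbc) (pow_nonneg hb.le w.length)
    linarith
  induction w with
  | nil => simp [shear]
  | cons i w ih =>
    have hd : |d i| ≤ shearBound b c d * (c - b) := by
      rw [shearBound, div_mul_cancel₀ _ (sub_pos.2 hbc).ne']
      exact Finset.single_le_sum (f := fun i => |d i|) (fun _ _ => abs_nonneg _)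
        (Finset.mem_univ i)
    calc |shear b c d (i :: w)|
        ≤ |d i * c ^ w.length| + |b * shear b c d w| := abs_add_le _ _
      _ = |d i| * c ^ w.length + b * |shear b c d w| := by
        rw [abs_mul, abs_mul, abs_of_pos (pow_pos hc _), abs_of_pos hb]
      _ ≤ shearBound b c d * (c - b) * c ^ w.length
          + b * (shearBound b c d * (c ^ w.length - b ^ w.length)) := by gcongr
      _ = shearBound b c d * (c ^ (i :: w).length - b ^ (i :: w).length) := by
        rw [List.length_cons]; ring

theorem mem_unitSq {p : ℝ × ℝ} : p ∈ unitSq ↔ (0 ≤ p.1 ∧ p.1 ≤ 1) ∧ 0 ≤ p.2 ∧ p.2 ≤ 1 :=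
  Iff.rfl

theorem isClosed_unitSq : IsClosed unitSq := isClosed_Icc.prod isClosed_Icc

theorem abs_fst_sub_le_one {p q : ℝ × ℝ} (hp : p ∈ unitSq) (hq : q ∈ unitSq) :
    |p.1 - q.1| ≤ 1 :=
  abs_sub_le_of_nonneg_of_le hp.1.1 hp.1.2 hq.1.1 hq.1.2

theorem abs_snd_sub_le_one {p q : ℝ × ℝ} (hp : p ∈ unitSq) (hq : q ∈ unitSq) :
    |p.2 - q.2| ≤ 1 :=
  abs_sub_le_of_nonneg_of_le hp.2.1 hp.2.2 hq.2.1 hq.2.2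

theorem Sword_mem_unitSq (hmaps : ∀ i, Smap c b u v d i '' unitSq ⊆ unitSq)
    (w : List (Fin N)) {p : ℝ × ℝ} (hp : p ∈ unitSq) : Sword c b u v d w p ∈ unitSq := by
  induction w with
  | nil => exact hp
  | cons i w ih => exact hmaps i ⟨_, ih, rfl⟩

/-- The level-`n` cylinder `S_{i|n}([0,1]²)`. -/
def parallelogram (c b : ℝ) (u v d : Fin N → ℝ) (i : ℕ → Fin N) (n : ℕ) : Set (ℝ × ℝ) :=
  Sword c b u v d (prefixWord i n) '' unitSq

end WordMaps

/-! ### The coding map -/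

/-- `Pi` is the natural projection of the system `S_i(x, y) = (c x + u_i, d_i x + b y + v_i)`,
which maps the unit square into itself and contracts more strongly in the vertical direction. -/
structure IsTriangularCoding {N : ℕ} (b c : ℝ) (u v d : Fin N → ℝ)
    (Pi : (ℕ → Fin N) → ℝ × ℝ) : Prop where
  b_pos : 0 < b
  b_lt_c : b < c
  c_lt_one : c < 1
  mapsTo : ∀ i, Smap c b u v d i '' unitSq ⊆ unitSq
  tendsto : ∀ i, Tendsto (fun n => Sword c b u v d (prefixWord i n) 0) atTop (𝓝 (Pi i))

namespace IsTriangularCoding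

variable {N : ℕ} {b c : ℝ} {u v d : Fin N → ℝ} {Pi : (ℕ → Fin N) → ℝ × ℝ}

theorem c_pos (H : IsTriangularCoding b c u v d Pi) : 0 < c := H.b_pos.trans H.b_lt_c

theorem b_lt_one (H : IsTriangularCoding b c u v d Pi) : b < 1 := H.b_lt_c.trans H.c_lt_one

theorem Pi_mem_unitSq (H : IsTriangularCoding b c u v d Pi) (i : ℕ → Fin N) :
    Pi i ∈ unitSq :=
  isClosed_unitSq.mem_of_tendsto (H.tendsto i) <| Eventually.of_forall fun _ =>
    Sword_mem_unitSq H.mapsTo _ (by simp [mem_unitSq])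

theorem Pi_eq_Smap (H : IsTriangularCoding b c u v d Pi) (i : ℕ → Fin N) :
    Pi i = Smap c b u v d (i 0) (Pi (wordShift 1 i)) := by
  have hcont : Continuous (Smap c b u v d (i 0)) := by unfold Smap; fun_prop
  refine tendsto_nhds_unique ((H.tendsto i).comp (tendsto_add_atTop_nat 1))
    (((hcont.tendsto _).comp (H.tendsto (wordShift 1 i))).congr fun n => ?_)
  simp only [Function.comp_apply, prefixWord_succ, Sword]

theorem Pi_eq_Sword (H : IsTriangularCoding b c u v d Pi) (m : ℕ) (i : ℕ → Fin N) :
    Pi i = Sword c b u v d (prefixWord i m) (Pi (wordShift m i)) := by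
  induction m generalizing i with
  | zero => rfl
  | succ m ih =>
    rw [H.Pi_eq_Smap i, ih (wordShift 1 i), wordShift_wordShift, prefixWord_succ, Sword,
      Function.comp_apply]

theorem Pi_mem_parallelogram (H : IsTriangularCoding b c u v d Pi) (i : ℕ → Fin N) (n : ℕ) :
    Pi i ∈ parallelogram c b u v d i n :=
  ⟨_, H.Pi_mem_unitSq _, (H.Pi_eq_Sword n i).symm⟩

theorem Pi_fst_sub (H : IsTriangularCoding b c u v d Pi) {m : ℕ} {i j : ℕ → Fin N}
    (h : wordPrefix m i = wordPrefix m j) :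
    (Pi i).1 - (Pi j).1 = c ^ m * ((Pi (wordShift m i)).1 - (Pi (wordShift m j)).1) := by
  rw [H.Pi_eq_Sword m i, H.Pi_eq_Sword m j, prefixWord_congr h, Sword_fst_sub,
    length_prefixWord]

theorem Pi_snd_sub (H : IsTriangularCoding b c u v d Pi) {m : ℕ} {i j : ℕ → Fin N}
    (h : wordPrefix m i = wordPrefix m j) :
    (Pi i).2 - (Pi j).2 =
      shear b c d (prefixWord i m) * ((Pi (wordShift m i)).1 - (Pi (wordShift m j)).1)
        + b ^ m * ((Pi (wordShift m i)).2 - (Pi (wordShift m j)).2) := by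
  rw [H.Pi_eq_Sword m i, H.Pi_eq_Sword m j, prefixWord_congr h, Sword_snd_sub,
    length_prefixWord]

theorem abs_Pi_fst_sub_le (H : IsTriangularCoding b c u v d Pi) {m : ℕ} {i j : ℕ → Fin N}
    (h : wordPrefix m i = wordPrefix m j) : |(Pi i).1 - (Pi j).1| ≤ c ^ m := by
  rw [H.Pi_fst_sub h, abs_mul, abs_of_pos (pow_pos H.c_pos m)]
  exact mul_le_of_le_one_right (pow_pos H.c_pos m).le
    (abs_fst_sub_le_one (H.Pi_mem_unitSq _) (H.Pi_mem_unitSq _))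

theorem abs_Pi_snd_sub_le (H : IsTriangularCoding b c u v d Pi) {m : ℕ} {i j : ℕ → Fin N}
    (h : wordPrefix m i = wordPrefix m j) :
    |(Pi i).2 - (Pi j).2| ≤ (shearBound b c d + 1) * c ^ m := by
  have hshear : |shear b c d (prefixWord i m)| ≤ shearBound b c d * c ^ m := by
    simpa only [length_prefixWord] using abs_shear_le H.b_pos H.b_lt_c (prefixWord i m)
  have hX := abs_fst_sub_le_one (H.Pi_mem_unitSq (wordShift m i)) (H.Pi_mem_unitSq (wordShift m j))
  have hY := abs_snd_sub_le_one (H.Pi_mem_unitSq (wordShift m i)) (H.Pi_mem_unitSq (wordShift m j))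
  rw [H.Pi_snd_sub h, add_mul, one_mul]
  refine (abs_add_le _ _).trans (add_le_add ?_ ?_)
  · rw [abs_mul]
    exact (mul_le_of_le_one_right (abs_nonneg _) hX).trans hshear
  · rw [abs_mul, abs_of_pos (pow_pos H.b_pos m)]
    exact (mul_le_of_le_one_right (pow_pos H.b_pos m).le hY).trans
      (pow_le_pow_left₀ H.b_pos.le H.b_lt_c.le m)

theorem dist_Pi_le (H : IsTriangularCoding b c u v d Pi) {m : ℕ} {i j : ℕ → Fin N}
    (h : wordPrefix m i = wordPrefix m j) :
    dist (Pi i) (Pi j) ≤ (shearBound b c d + 1) * c ^ m :=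
  max_le ((H.abs_Pi_fst_sub_le h).trans <| le_mul_of_one_le_left (pow_pos H.c_pos m).le <|
    le_add_of_nonneg_left <| shearBound_nonneg H.b_lt_c) (H.abs_Pi_snd_sub_le h)

theorem continuous_Pi (H : IsTriangularCoding b c u v d Pi) : Continuous Pi := by
  refine continuous_iff_continuousAt.2 fun i => Metric.tendsto_nhds.2 fun ε hε => ?_
  have hlim : Tendsto (fun m : ℕ => (shearBound b c d + 1) * c ^ m) atTop (𝓝 0) := by
    simpa only [mul_zero] using
      (tendsto_pow_atTop_nhds_zero_of_lt_one H.c_pos.le H.c_lt_one).const_mul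
        (shearBound b c d + 1)
  obtain ⟨m, hm⟩ := (hlim.eventually_lt_const hε).exists
  have hcont : Continuous (wordPrefix (α := Fin N) m) := by unfold wordPrefix; fun_prop
  filter_upwards [hcont.continuousAt.eventually (isOpen_discrete {wordPrefix m i} |>.mem_nhds rfl)]
    with j hj
  exact (H.dist_Pi_le hj).trans_lt hm

end IsTriangularCoding

/-! ### The uniform Bernoulli measure -/

section Bernoulli

theorem measurable_wordPrefix {α : Type*} [MeasurableSpace α] (m : ℕ) :
    Measurable (wordPrefix (α := α) m) :=
  measurable_pi_lambda _ fun _ => measurable_pi_apply _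

theorem measurable_wordShift {α : Type*} [MeasurableSpace α] (m : ℕ) :
    Measurable (wordShift (α := α) m) :=
  measurable_pi_lambda _ fun _ => measurable_pi_apply _

theorem measurableSet_wordPrefix_fiber {α : Type*} [MeasurableSpace α]
    [MeasurableSingletonClass α] {m : ℕ} (w : Fin m → α) :
    MeasurableSet (wordPrefix m ⁻¹' {w}) :=
  measurable_wordPrefix m (measurableSet_singleton w)

theorem cylinder_eq_wordPrefix_fiber {α : Type*} (x : ℕ → α) (n : ℕ) :
    PiNat.cylinder x n = wordPrefix n ⁻¹' {wordPrefix n x} := by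
  ext y
  simp only [PiNat.mem_cylinder_iff, mem_preimage, mem_singleton_iff, wordPrefix_eq_iff]

theorem measure_ext_of_wordPrefix {α : Type*} [Countable α] [TopologicalSpace α]
    [DiscreteTopology α] [MeasurableSpace α] [BorelSpace α] {μ ν : Measure (ℕ → α)}
    [IsFiniteMeasure μ]
    (h : ∀ (n : ℕ) (w : Fin n → α), μ (wordPrefix n ⁻¹' {w}) = ν (wordPrefix n ⁻¹' {w})) :
    μ = ν := by
  have hbasis := PiNat.isTopologicalBasis_cylinders (E := fun _ : ℕ => α)
  refine ext_of_generate_finite _ (BorelSpace.measurable_eq.trans hbasis.borel_eq_generateFrom)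
    ?_ ?_ ?_
  · rintro _ ⟨x, m, rfl⟩ _ ⟨y, n, rfl⟩ ⟨z, hzx, hzy⟩
    refine ⟨z, max m n, ?_⟩
    rw [← PiNat.mem_cylinder_iff_eq.1 hzx, ← PiNat.mem_cylinder_iff_eq.1 hzy]
    ext t
    simp only [mem_inter_iff, PiNat.mem_cylinder_iff, lt_max_iff, or_imp, forall_and]
  · rintro _ ⟨x, n, rfl⟩
    rw [cylinder_eq_wordPrefix_fiber, h]
  · rw [← preimage_univ (f := wordPrefix 0), univ_unique]
    exact h 0 default

theorem wordPrefix_add {α : Type*} (m n : ℕ) (i : ℕ → α) :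
    wordPrefix (m + n) i = Fin.append (wordPrefix m i) (wordPrefix n (wordShift m i)) := by
  funext k
  refine Fin.addCases (fun k => ?_) (fun k => ?_) k
  · rw [Fin.append_left]; rfl
  · rw [Fin.append_right]; simp [wordPrefix, wordShift, add_comm]

variable {N : ℕ} {μ : Measure (ℕ → Fin N)}

namespace IsUniformBernoulli

theorem measure_fiber (hμ : IsUniformBernoulli N μ) {m : ℕ} (w : Fin m → Fin N) :
    μ (wordPrefix m ⁻¹' {w}) = (1 / (N : ℝ≥0∞)) ^ m := by
  rw [← hμ.2 m w]
  congr 1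
  ext i
  simp only [mem_preimage, mem_singleton_iff, funext_iff, wordPrefix, mem_ofPred_eq]

theorem map_wordShift_restrict (hμ : IsUniformBernoulli N μ) {m : ℕ} (w : Fin m → Fin N) :
    (μ.restrict (wordPrefix m ⁻¹' {w})).map (wordShift m) = (1 / (N : ℝ≥0∞)) ^ m • μ := by
  have := hμ.1
  have := Measure.isFiniteMeasure_map (μ.restrict (wordPrefix m ⁻¹' {w})) (wordShift m)
  refine measure_ext_of_wordPrefix fun n w' => ?_
  have hconcat : wordShift m ⁻¹' (wordPrefix n ⁻¹' {w'}) ∩ wordPrefix m ⁻¹' {w} =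
      wordPrefix (m + n) ⁻¹' {Fin.append w w'} := by
    ext i
    simp only [mem_inter_iff, mem_preimage, mem_singleton_iff, wordPrefix_add]
    rw [and_comm, ← Prod.mk_inj]
    exact (Fin.appendEquiv (α := Fin N) m n).injective.eq_iff.symm
  have hmeas := measurableSet_wordPrefix_fiber w'
  rw [Measure.map_apply (measurable_wordShift m) hmeas,
    Measure.restrict_apply (measurable_wordShift m hmeas), hconcat, hμ.measure_fiber,
    Measure.smul_apply, hμ.measure_fiber, pow_add, smul_eq_mul]

theorem measureReal_fiber_inter_wordShift (hμ : IsUniformBernoulli N μ) {m : ℕ}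
    (w : Fin m → Fin N) {A : Set (ℕ → Fin N)} (hA : MeasurableSet A) :
    μ.real (wordPrefix m ⁻¹' {w} ∩ wordShift m ⁻¹' A) = ((N : ℝ) ^ m)⁻¹ * μ.real A := by
  have h := congrArg (fun ρ : Measure (ℕ → Fin N) => (ρ A).toReal) (hμ.map_wordShift_restrict w)
  simpa [Measure.map_apply (measurable_wordShift m) hA,
    Measure.restrict_apply (measurable_wordShift m hA), inter_comm, measureReal_def] using h

theorem measureReal_prod_fiber_inter_wordShift (hμ : IsUniformBernoulli N μ) {m : ℕ}
    (w w' : Fin m → Fin N) {A : Set ((ℕ → Fin N) × (ℕ → Fin N))} (hA : MeasurableSet A) :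
    (μ.prod μ).real
        (Prod.map (wordPrefix m) (wordPrefix m) ⁻¹' {(w, w')} ∩
          Prod.map (wordShift m) (wordShift m) ⁻¹' A) =
      ((N : ℝ) ^ m)⁻¹ * ((N : ℝ) ^ m)⁻¹ * (μ.prod μ).real A := by
  have := hμ.1
  have hshift := measurable_wordShift (α := Fin N) m
  have h := Measure.map_prod_map (μ.restrict (wordPrefix m ⁻¹' {w}))
    (μ.restrict (wordPrefix m ⁻¹' {w'})) hshift hshift
  rw [Measure.prod_restrict, hμ.map_wordShift_restrict, hμ.map_wordShift_restrict,
    Measure.prod_smul_left, Measure.prod_smul_right] at h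
  have hA' := congrArg (fun ρ : Measure ((ℕ → Fin N) × (ℕ → Fin N)) => (ρ A).toReal) h.symm
  rw [← singleton_prod_singleton, preimage_prod_map_prod]
  simpa [Measure.map_apply (hshift.prodMap hshift) hA,
    Measure.restrict_apply (hshift.prodMap hshift hA), inter_comm, measureReal_def,
    mul_assoc] using hA'

theorem measureReal_prod_fiber (hμ : IsUniformBernoulli N μ) {m : ℕ} (w w' : Fin m → Fin N) :
    (μ.prod μ).real (Prod.map (wordPrefix m) (wordPrefix m) ⁻¹' {(w, w')}) =
      ((N : ℝ) ^ m)⁻¹ * ((N : ℝ) ^ m)⁻¹ := by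
  have := hμ.1
  simpa using hμ.measureReal_prod_fiber_inter_wordShift w w' MeasurableSet.univ

theorem ne_zero (hμ : IsUniformBernoulli N μ) : N ≠ 0 := by
  rintro rfl
  have := hμ.1
  obtain ⟨i⟩ := nonempty_of_isProbabilityMeasure μ
  exact (i 0).elim0

theorem measureReal_le_of_common_prefix (hμ : IsUniformBernoulli N μ) (k : ℕ)
    {A E : Set ((ℕ → Fin N) × (ℕ → Fin N))} (hA : MeasurableSet A)
    (hE : ∀ x ∈ E, wordPrefix k x.1 = wordPrefix k x.2 ∧
      (wordShift k x.1, wordShift k x.2) ∈ A) :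
    (μ.prod μ).real E ≤ ((N : ℝ) ^ k)⁻¹ * (μ.prod μ).real A := by
  have := hμ.1
  have hsub : E ⊆ ⋃ w ∈ (Finset.univ : Finset (Fin k → Fin N)),
      (Prod.map (wordPrefix k) (wordPrefix k) ⁻¹' {(w, w)} ∩
        Prod.map (wordShift k) (wordShift k) ⁻¹' A) := fun x hx =>
    mem_biUnion (Finset.mem_univ (wordPrefix k x.1))
      ⟨Prod.ext rfl (hE x hx).1.symm, (hE x hx).2⟩
  calc (μ.prod μ).real E
      ≤ ∑ w : Fin k → Fin N, (μ.prod μ).real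
          (Prod.map (wordPrefix k) (wordPrefix k) ⁻¹' {(w, w)} ∩
            Prod.map (wordShift k) (wordShift k) ⁻¹' A) :=
        (measureReal_mono hsub (measure_ne_top _ _)).trans (measureReal_biUnion_finset_le _ _)
    _ = ((N : ℝ) ^ k)⁻¹ * (μ.prod μ).real A := by
        have : (N : ℝ) ^ k ≠ 0 := pow_ne_zero _ (Nat.cast_ne_zero.2 hμ.ne_zero)
        simp only [hμ.measureReal_prod_fiber_inter_wordShift _ _ hA, Finset.sum_const,
          Finset.card_univ, Fintype.card_pi_const, Fintype.card_fin, nsmul_eq_mul]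
        push_cast
        field_simp

end IsUniformBernoulli

end Bernoulli

theorem measureReal_le_mul_of_fiberwise {X ι : Type*} [MeasurableSpace X] [Finite ι]
    [MeasurableSpace ι] [MeasurableSingletonClass ι] {ρ : Measure X} [IsFiniteMeasure ρ]
    {g : X → ι} (hg : Measurable g) {E D : Set X} {β : ℝ} (hβ : 0 ≤ β)
    (hsat : ∀ x ∈ E, ∀ y, g y = g x → y ∈ D)
    (hfiber : ∀ w, ρ.real (E ∩ g ⁻¹' {w}) ≤ β * ρ.real (g ⁻¹' {w})) :
    ρ.real E ≤ β * ρ.real D := by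
  let T : Finset ι := (toFinite (g '' E)).toFinset
  have hT : (T : Set ι) = g '' E := (toFinite (g '' E)).coe_toFinset
  have hcover : E ⊆ ⋃ w ∈ T, E ∩ g ⁻¹' {w} := fun x hx =>
    mem_biUnion (hT.ge (mem_image_of_mem g hx)) ⟨hx, rfl⟩
  have hTD : g ⁻¹' T ⊆ D := fun y hy => by
    rw [hT] at hy
    obtain ⟨x, hx, hxy⟩ := hy
    exact hsat x hx y hxy.symm
  calc ρ.real E ≤ ∑ w ∈ T, ρ.real (E ∩ g ⁻¹' {w}) :=
        (measureReal_mono hcover (measure_ne_top _ _)).trans (measureReal_biUnion_finset_le _ _)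
    _ ≤ ∑ w ∈ T, β * ρ.real (g ⁻¹' {w}) := Finset.sum_le_sum fun w _ => hfiber w
    _ = β * ρ.real (g ⁻¹' T) := by
        rw [← Finset.mul_sum,
          sum_measureReal_preimage_singleton T fun w _ => hg (measurableSet_singleton w)]
    _ ≤ β * ρ.real D := mul_le_mul_of_nonneg_left (measureReal_mono hTD) hβ

/-! ### Frostman measures on the line -/

section Frostman

/-- `m` is `θ`-Frostman with constant `C`: an interval of length `r` has mass at most `C r^θ`. -/
def IsFrostman (m : Measure ℝ) (C θ : ℝ) : Prop :=
  ∀ a r : ℝ, 0 ≤ r → m.real (Icc a (a + r)) ≤ C * r ^ θ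

theorem IsFrostman.nonneg {m : Measure ℝ} {C θ : ℝ} (h : IsFrostman m C θ) : 0 ≤ C := by
  simpa using measureReal_nonneg.trans (h 0 1 zero_le_one)

theorem setLIntegral_le_rpow_mul_rpow {X : Type*} [MeasurableSpace X] (ρ : Measure X)
    (φ : X → ℝ≥0∞) {q : ℝ} (hq : 1 < q) (s : Set X) :
    ∫⁻ t in s, φ t ∂ρ ≤ (∫⁻ t, φ t ^ q ∂ρ) ^ (1 / q) * ρ s ^ (1 - 1 / q) := by
  obtain ⟨g, hg, hgφ, hint⟩ := exists_measurable_le_lintegral_eq (ρ.restrict s) φ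
  have hpq : q.HolderConjugate (q / (q - 1)) := Real.HolderConjugate.conjExponent hq
  have hexp : 1 / (q / (q - 1)) = 1 - 1 / q := by
    have := hpq.pos.ne'
    field_simp
  have hHolder := ENNReal.lintegral_mul_le_Lp_mul_Lq (ρ.restrict s) hpq hg.aemeasurable
    (aemeasurable_const (b := (1 : ℝ≥0∞)))
  simp only [Pi.mul_apply, mul_one, ENNReal.one_rpow, lintegral_one, Measure.restrict_apply_univ,
    hexp] at hHolder
  rw [hint]
  refine hHolder.trans ?_
  refine mul_le_mul_left (ENNReal.rpow_le_rpow ?_ (one_div_pos.2 hpq.pos).le) _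
  refine (setLIntegral_le_lintegral _ _).trans (lintegral_mono fun t => ?_)
  exact ENNReal.rpow_le_rpow (hgφ t) hpq.pos.le

theorem HasLqDensity.exists_isFrostman {m : Measure ℝ} {q : ℝ} (hq : 1 < q)
    (h : HasLqDensity m q) : ∃ C, IsFrostman m C (1 - 1 / q) := by
  obtain ⟨φ, rfl, hφ⟩ := h
  have hq0 : 0 < q := zero_lt_one.trans hq
  have hθ : 0 ≤ 1 - 1 / q := sub_nonneg.2 ((div_le_one hq0).2 hq.le)
  refine ⟨((∫⁻ t, φ t ^ q) ^ (1 / q)).toReal, fun a r hr => ?_⟩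
  have hbound := setLIntegral_le_rpow_mul_rpow volume φ hq (Icc a (a + r))
  rw [Real.volume_Icc, add_sub_cancel_left, ENNReal.ofReal_rpow_of_nonneg hr hθ] at hbound
  rw [measureReal_def, withDensity_apply _ measurableSet_Icc,
    ← ENNReal.toReal_ofReal (Real.rpow_nonneg hr (1 - 1 / q)), ← ENNReal.toReal_mul]
  refine ENNReal.toReal_mono (ENNReal.mul_ne_top ?_ ENNReal.ofReal_ne_top) hbound
  exact ENNReal.rpow_ne_top_of_nonneg (one_div_pos.2 hq0).le hφ.ne

/-- The pairs `x` for which `f x.2` lies in the interval `[a, a + L]` and `f x.1 - f x.2` is within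
`ρ` of `κ`. -/
def differenceStrip {X : Type*} (f : X → ℝ) (a L κ ρ : ℝ) : Set (X × X) :=
  {x | f x.2 ∈ Icc a (a + L) ∧ |f x.1 - f x.2 - κ| ≤ ρ}

theorem measurableSet_differenceStrip {X : Type*} [MeasurableSpace X] {f : X → ℝ}
    (hf : Measurable f) (a L κ ρ : ℝ) : MeasurableSet (differenceStrip f a L κ ρ) :=
  (hf.comp measurable_snd measurableSet_Icc).inter
    (measurableSet_le (((hf.comp measurable_fst).sub (hf.comp measurable_snd)).sub_const κ).abs
      measurable_const)

theorem IsFrostman.measureReal_prod_differenceStrip_le {X : Type*} [MeasurableSpace X]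
    {μ : Measure X} [IsFiniteMeasure μ] {f : X → ℝ} (hf : Measurable f) {C θ : ℝ}
    (h : IsFrostman (μ.map f) C θ) (a κ : ℝ) {L ρ : ℝ} (hL : 0 ≤ L) (hρ : 0 ≤ ρ) :
    (μ.prod μ).real (differenceStrip f a L κ ρ) ≤
      (C * (2 * ρ) ^ θ) * (C * L ^ θ) := by
  have hC := h.nonneg
  have hFrost (a r : ℝ) (hr : 0 ≤ r) :
      μ (f ⁻¹' Icc a (a + r)) ≤ ENNReal.ofReal (C * r ^ θ) := by
    rw [← ofReal_measureReal, ← map_measureReal_apply hf measurableSet_Icc]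
    exact ENNReal.ofReal_le_ofReal (h a r hr)
  refine ENNReal.toReal_le_of_le_ofReal (by positivity) ?_
  rw [Measure.prod_apply_symm (measurableSet_differenceStrip hf a L κ ρ)]
  calc ∫⁻ y, μ ((fun x => (x, y)) ⁻¹' differenceStrip f a L κ ρ) ∂μ
      ≤ ∫⁻ y, (f ⁻¹' Icc a (a + L)).indicator
          (fun _ => ENNReal.ofReal (C * (2 * ρ) ^ θ)) y ∂μ := by
        refine lintegral_mono fun y => ?_
        by_cases hy : y ∈ f ⁻¹' Icc a (a + L)
        · rw [indicator_of_mem hy]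
          refine (measure_mono ?_).trans (hFrost (f y + κ - ρ) (2 * ρ) (by positivity))
          rintro x ⟨-, hx⟩
          have := abs_le.1 hx
          constructor <;> linarith
        · rw [indicator_of_notMem hy, nonpos_iff_eq_zero]
          convert measure_empty (μ := μ)
          exact eq_empty_of_forall_notMem fun x hx => hy hx.1
    _ = ENNReal.ofReal (C * (2 * ρ) ^ θ) * μ (f ⁻¹' Icc a (a + L)) :=
        lintegral_indicator_const (hf measurableSet_Icc) _
    _ ≤ ENNReal.ofReal (C * (2 * ρ) ^ θ) * ENNReal.ofReal (C * L ^ θ) := by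
        gcongr
        exact hFrost a L hL
    _ = ENNReal.ofReal ((C * (2 * ρ) ^ θ) * (C * L ^ θ)) :=
        (ENNReal.ofReal_mul (by positivity)).symm

end Frostman

/-! ### Transversality and points of the attractor inside the square -/

section Overlap

variable {N : ℕ} {b c : ℝ} {u v d : Fin N → ℝ}

/-- The form in which transversality is used: for words with different first letters, the
overlap of the two level-`n` parallelograms has horizontal extent at most `c₃ bⁿ`. -/
def HasOverlapBound (c b : ℝ) (u v d : Fin N → ℝ) (c₃ : ℝ) : Prop :=
  ∀ (n : ℕ) (i j : ℕ → Fin N), i 0 ≠ j 0 →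
    ∀ p ∈ parallelogram c b u v d i n ∩ parallelogram c b u v d j n,
      ∀ q ∈ parallelogram c b u v d i n ∩ parallelogram c b u v d j n, |p.1 - q.1| ≤ c₃ * b ^ n

theorem Transversality.exists_hasOverlapBound (hT : Transversality N c b u v d)
    (hmaps : ∀ i, Smap c b u v d i '' unitSq ⊆ unitSq) :
    ∃ c₃ > 0, HasOverlapBound c b u v d c₃ := by
  obtain ⟨c₃, hc₃, hdiam⟩ := hT
  refine ⟨c₃, hc₃, fun n i j hij p hp q hq => le_trans ?_ (hdiam n i j hij).le⟩
  refine Metric.dist_le_diam_of_mem (Metric.isBounded_Icc (0 : ℝ) 1 |>.subset ?_)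
    (mem_image_of_mem _ hp) (mem_image_of_mem _ hq)
  rintro _ ⟨_, ⟨⟨r, hr, rfl⟩, -⟩, rfl⟩
  exact (Sword_mem_unitSq hmaps _ hr).1

theorem shear_eq_zero (hd : ∀ i, d i = 0) (w : List (Fin N)) : shear b c d w = 0 := by
  induction w with
  | nil => rfl
  | cons i w ih => simp [shear, hd, ih]

theorem Sword_zero_snd_of_horizontal {v₀ : ℝ} (hd : ∀ i, d i = 0) (hv : ∀ i, v i = v₀)
    (w : List (Fin N)) :
    (Sword c b u v d w 0).2 = v₀ * ∑ k ∈ Finset.range w.length, b ^ k := by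
  induction w with
  | nil => simp [Sword]
  | cons i w ih =>
    simp only [Sword, Function.comp_apply, Smap, hd, hv, ih, List.length_cons, geom_sum_succ]
    ring

theorem Sword_eq_translate_of_horizontal {v₀ : ℝ} (hd : ∀ i, d i = 0) (hv : ∀ i, v i = v₀)
    {w w' : List (Fin N)} (hlen : w.length = w'.length) {δ : ℝ}
    (hδ : δ * c ^ w.length = (Sword c b u v d w' 0).1 - (Sword c b u v d w 0).1) (p : ℝ × ℝ) :
    Sword c b u v d w p = Sword c b u v d w' (p.1 - δ, p.2) := by
  have hfst := Sword_fst_sub (c := c) (b := b) (u := u) (v := v) (d := d) w p 0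
  have hfst' := Sword_fst_sub (c := c) (b := b) (u := u) (v := v) (d := d) w' (p.1 - δ, p.2) 0
  have hsnd := Sword_snd_sub (c := c) (b := b) (u := u) (v := v) (d := d) w p 0
  have hsnd' := Sword_snd_sub (c := c) (b := b) (u := u) (v := v) (d := d) w' (p.1 - δ, p.2) 0
  simp only [← hlen, shear_eq_zero hd, Sword_zero_snd_of_horizontal hd hv, Prod.fst_zero,
    Prod.snd_zero, sub_zero] at hfst hfst' hsnd hsnd'
  exact Prod.ext (by linear_combination hfst - hfst' + hδ) (by linear_combination hsnd - hsnd')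

theorem exists_wide_overlap_of_horizontal (hc : 0 < c) {v₀ : ℝ} (hd : ∀ i, d i = 0)
    (hv : ∀ i, v i = v₀) {n : ℕ} {i j : ℕ → Fin N}
    (hij : |(Sword c b u v d (prefixWord i n) 0).1 - (Sword c b u v d (prefixWord j n) 0).1|
      ≤ c ^ n / 2) :
    ∃ p ∈ parallelogram c b u v d i n ∩ parallelogram c b u v d j n,
      ∃ q ∈ parallelogram c b u v d i n ∩ parallelogram c b u v d j n,
        c ^ n / 2 ≤ |p.1 - q.1| := by
  have hcn : 0 < c ^ n := pow_pos hc n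
  obtain ⟨δ, hδ⟩ : ∃ δ, δ * c ^ n =
      (Sword c b u v d (prefixWord j n) 0).1 - (Sword c b u v d (prefixWord i n) 0).1 :=
    ⟨_, div_mul_cancel₀ _ hcn.ne'⟩
  have hδ2 : |δ| ≤ 1 / 2 := by
    rw [abs_sub_comm, ← hδ, abs_mul, abs_of_pos hcn] at hij
    exact le_of_mul_le_mul_right (hij.trans_eq (by ring)) hcn
  have hmem (t : ℝ) (ht : t ∈ Icc 0 1) (htδ : t - δ ∈ Icc 0 1) :
      Sword c b u v d (prefixWord i n) (t, 0) ∈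
        parallelogram c b u v d i n ∩ parallelogram c b u v d j n :=
    ⟨⟨_, ⟨ht, by simp⟩, rfl⟩, ⟨_, ⟨htδ, by simp⟩, (Sword_eq_translate_of_horizontal hd hv
      (by simp only [length_prefixWord]) (by rwa [length_prefixWord]) (t, 0)).symm⟩⟩
  obtain ⟨hδl, hδr⟩ := abs_le.1 hδ2
  obtain ⟨s, t, hs, hsδ, ht, htδ, hst⟩ : ∃ s t, s ∈ Icc 0 1 ∧ s - δ ∈ Icc 0 1 ∧ t ∈ Icc 0 1 ∧
      t - δ ∈ Icc 0 1 ∧ 1 / 2 ≤ |s - t| := by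
    rcases le_total 0 δ with h | h
    · refine ⟨1, δ, ?_, ?_, ?_, ?_, le_abs.2 (Or.inl ?_)⟩ <;> grind
    · refine ⟨1 + δ, 0, ?_, ?_, ?_, ?_, le_abs.2 (Or.inl ?_)⟩ <;> grind
  refine ⟨_, hmem s hs hsδ, _, hmem t ht htδ, ?_⟩
  rw [Sword_fst_sub, length_prefixWord, abs_mul, abs_of_pos hcn, div_eq_mul_one_div]
  exact mul_le_mul_of_nonneg_left hst hcn.le

/-- In the horizontal case the corners of the level-`(m₀ + s)` parallelograms determine the first
`s` letters up to errors of half a width, since overlaps `c₃ bⁿ` are much thinner than `cⁿ`. -/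
theorem exists_wordPrefix_eq_of_horizontal (hb : 0 < b) (hbc : b < c) {c₃ v₀ : ℝ}
    (hov : HasOverlapBound c b u v d c₃) (hd : ∀ i, d i = 0) (hv : ∀ i, v i = v₀) :
    ∃ m₀ : ℕ, ∀ (s : ℕ) (i j : ℕ → Fin N),
      |(Sword c b u v d (prefixWord i (m₀ + s)) 0).1
        - (Sword c b u v d (prefixWord j (m₀ + s)) 0).1| ≤ c ^ (m₀ + s) / 2 →
      wordPrefix s i = wordPrefix s j := by
  have hc : 0 < c := hb.trans hbc
  have hthin : ∀ᶠ m : ℕ in atTop, c₃ * b ^ m < c ^ m / 2 := by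
    have hlim : Tendsto (fun m : ℕ => c₃ * (b / c) ^ m) atTop (𝓝 (c₃ * 0)) :=
      (tendsto_pow_atTop_nhds_zero_of_lt_one (div_nonneg hb.le hc.le)
        ((div_lt_one hc).2 hbc)).const_mul c₃
    rw [mul_zero] at hlim
    filter_upwards [hlim.eventually_lt_const one_half_pos] with m hm
    rw [div_pow, ← mul_div_assoc, div_lt_iff₀ (pow_pos hc m)] at hm
    linarith
  obtain ⟨m₀, hm₀⟩ := eventually_atTop.1 hthin
  refine ⟨m₀, fun s => ?_⟩
  induction s with
  | zero => exact fun i j _ => Subsingleton.elim _ _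
  | succ s ih =>
    intro i j hclose
    have hfirst : i 0 = j 0 := by
      by_contra hne
      obtain ⟨p, hp, q, hq, hpq⟩ := exists_wide_overlap_of_horizontal hc hd hv hclose
      exact (hpq.trans (hov _ i j hne p hp q hq)).not_gt (hm₀ _ (Nat.le_add_right _ _))
    have htail : wordPrefix s (wordShift 1 i) = wordPrefix s (wordShift 1 j) := by
      refine ih _ _ (le_of_mul_le_mul_left ?_ hc)
      rw [← add_assoc, prefixWord_succ, prefixWord_succ, hfirst] at hclose
      simp only [Sword, Function.comp_apply, Smap, add_sub_add_right_eq_sub, ← mul_sub, abs_mul,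
        abs_of_pos hc] at hclose
      exact hclose.trans_eq (by ring)
    refine wordPrefix_eq_iff.2 fun k hk => ?_
    rcases k with _ | k
    · exact hfirst
    · exact wordPrefix_eq_iff.1 htail k (by omega)

theorem card_mul_le_of_pairwise_separated {ι : Type*} [Fintype ι] {f : ι → ℝ} {δ : ℝ}
    (hδ : 0 ≤ δ) (hf : ∀ x, f x ∈ Icc 0 1) (hsep : Pairwise fun x y => δ ≤ |f x - f y|) :
    Fintype.card ι * δ ≤ 1 + δ := by
  have hdisj : Pairwise (Function.onFun Disjoint fun x => Ico (f x) (f x + δ)) := by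
    intro x y hxy
    refine disjoint_left.2 fun t hx hy => (hsep hxy).not_gt (abs_lt.2 ?_)
    constructor <;> linarith [hx.1, hx.2, hy.1, hy.2]
  have hsub : ⋃ x ∈ (Finset.univ : Finset ι), Ico (f x) (f x + δ) ⊆ Icc 0 (1 + δ) :=
    iUnion₂_subset fun x _ t ht => ⟨(hf x).1.trans ht.1, ht.2.le.trans (by linarith [(hf x).2])⟩
  have hvol := measureReal_mono (μ := volume) hsub measure_Icc_lt_top.ne
  rw [measureReal_biUnion_finset (fun x _ y _ hxy => hdisj hxy) (fun _ _ => measurableSet_Ico)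
    fun _ _ => measure_Ico_lt_top.ne]
    at hvol
  simpa [Real.volume_real_Ico_of_le, Real.volume_real_Icc_of_le, hδ, add_nonneg] using hvol

theorem wordPrefix_surjective {α : Type*} [Nonempty α] (m : ℕ) :
    Function.Surjective (wordPrefix (α := α) m) := fun w =>
  ⟨Function.extend Fin.val w fun _ => Classical.arbitrary α,
    funext fun k => Fin.val_injective.extend_apply w _ k⟩

theorem not_horizontal_of_hasOverlapBound (hb : 0 < b) (hbc : b < c) (hc1 : c < 1)
    (hNc : 1 < N * c) (hmaps : ∀ i, Smap c b u v d i '' unitSq ⊆ unitSq) {c₃ : ℝ}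
    (hov : HasOverlapBound c b u v d c₃) (v₀ : ℝ) : ¬ ((∀ i, d i = 0) ∧ ∀ i, v i = v₀) := by
  rintro ⟨hd, hv⟩
  have hc : 0 < c := hb.trans hbc
  have hN : N ≠ 0 := by rintro rfl; norm_num at hNc
  have : Nonempty (Fin N) := Fin.pos_iff_nonempty.1 (Nat.pos_of_ne_zero hN)
  obtain ⟨m₀, hprefix⟩ := exists_wordPrefix_eq_of_horizontal hb hbc hov hd hv
  have hbound (s : ℕ) : (N * c) ^ s ≤ 4 / c ^ m₀ := by
    obtain ⟨word, hword⟩ := (wordPrefix_surjective (α := Fin N) s).hasRightInverse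
    have hcard := card_mul_le_of_pairwise_separated
      (f := fun w => (Sword c b u v d (prefixWord (word w) (m₀ + s)) 0).1)
      (div_nonneg (pow_pos hc (m₀ + s)).le zero_le_two)
      (fun w => (Sword_mem_unitSq hmaps _ (by simp [mem_unitSq])).1)
      (fun w w' hne => le_of_not_ge fun hle => hne <| by
        rw [← hword w, ← hword w', hprefix s _ _ hle])
    have hle : c ^ (m₀ + s) ≤ 1 := pow_le_one₀ hc.le hc1.le
    rw [le_div_iff₀ (pow_pos hc m₀), mul_pow]
    simp only [Fintype.card_pi_const, Fintype.card_fin, Nat.cast_pow, pow_add] at hcard hle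
    linarith
  obtain ⟨s, hs⟩ := ((tendsto_pow_atTop_atTop_of_one_lt hNc).eventually_gt_atTop
    (4 / c ^ m₀)).exists
  exact (hbound s).not_gt hs

end Overlap

theorem mem_interior_unitSq {p : ℝ × ℝ} :
    p ∈ interior unitSq ↔ (0 < p.1 ∧ p.1 < 1) ∧ 0 < p.2 ∧ p.2 < 1 := by
  rw [unitSq, interior_prod_eq, interior_Icc]
  rfl

theorem fst_or_snd_mem_of_notMem_interior {p : ℝ × ℝ} (hp : p ∈ unitSq)
    (hint : p ∉ interior unitSq) : p.1 ∈ ({0, 1} : Set ℝ) ∨ p.2 ∈ ({0, 1} : Set ℝ) := by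
  obtain ⟨⟨hx0, hx1⟩, hy0, hy1⟩ := hp
  contrapose! hint
  simp only [mem_insert_iff, mem_singleton_iff, not_or] at hint
  exact mem_interior_unitSq.2 ⟨⟨hx0.lt_of_ne' hint.1.1, hx1.lt_of_ne hint.1.2⟩,
    hy0.lt_of_ne' hint.2.1, hy1.lt_of_ne hint.2.2⟩

namespace IsTriangularCoding

variable {N : ℕ} {b c : ℝ} {u v d : Fin N → ℝ} {Pi : (ℕ → Fin N) → ℝ × ℝ}

theorem Smap_Pi_mem_range (H : IsTriangularCoding b c u v d Pi) (a : Fin N) (i : ℕ → Fin N) :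
    Smap c b u v d a (Pi i) ∈ range Pi :=
  ⟨fun k => Nat.casesOn k a i, H.Pi_eq_Smap _⟩

theorem exists_infinite_horizontal_slice {μ : Measure (ℕ → Fin N)} [NeZero μ]
    (hna : NullSingletonClass (μ.map fun i => (Pi i).1)) (hmeas : Measurable Pi)
    (hbd : ∀ i, (Pi i).1 ∈ ({0, 1} : Set ℝ) ∨ (Pi i).2 ∈ ({0, 1} : Set ℝ)) :
    ∃ y ∈ ({0, 1} : Set ℝ), {x | (x, y) ∈ range Pi}.Infinite := by
  by_contra! hfin
  have hF := ((toFinite ({0, 1} : Set ℝ)).union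
    (hfin 0 (by simp))).union (hfin 1 (by simp))
  have hnull := hF.measure_zero (μ.map fun i => (Pi i).1)
  rw [Measure.map_apply hmeas.fst hF.measurableSet] at hnull
  refine NeZero.ne μ (Measure.measure_univ_eq_zero.1 (measure_mono_null (fun i _ => ?_) hnull))
  rcases hbd i with hx | hy | hy
  · exact Or.inl (Or.inl hx)
  · exact Or.inl (Or.inr ⟨i, Prod.ext rfl hy⟩)
  · exact Or.inr ⟨i, Prod.ext rfl hy⟩

/-- If the attractor lies in the boundary of the square and contains infinitely many points of
height `y`, then `S_a` maps all but two of them to height `0` or `1`. -/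
theorem horizontal_of_infinite_slice (H : IsTriangularCoding b c u v d Pi)
    (hbd : ∀ i, (Pi i).1 ∈ ({0, 1} : Set ℝ) ∨ (Pi i).2 ∈ ({0, 1} : Set ℝ)) {y : ℝ}
    (hy : y ∈ ({0, 1} : Set ℝ)) (hinf : {x | (x, y) ∈ range Pi}.Infinite) (a : Fin N) :
    d a = 0 ∧ v a = y * (1 - b) := by
  have hc := H.c_pos.ne'
  have hheight (F : Finset ℝ) : ∃ x ∉ F, d a * x + b * y + v a ∈ ({0, 1} : Set ℝ) := by
    obtain ⟨x, ⟨i, hi⟩, hx⟩ := hinf.exists_notMem_finset (F ∪ {-u a / c, (1 - u a) / c})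
    simp only [Finset.mem_union, Finset.mem_insert, Finset.mem_singleton, not_or,
      eq_div_iff hc] at hx
    obtain ⟨j, hj⟩ := H.Smap_Pi_mem_range a i
    have hbdj := hbd j
    rw [hj, hi] at hbdj
    refine ⟨x, hx.1, hbdj.resolve_left ?_⟩
    rintro (h | h) <;> simp only [Smap] at h
    · exact hx.2.1 (by linarith)
    · exact hx.2.2 (by linarith [mem_singleton_iff.1 h])
  have hd : d a = 0 := by
    by_contra hda
    obtain ⟨x, hx, hval⟩ := hheight {(-b * y - v a) / d a, (1 - b * y - v a) / d a}
    simp only [Finset.mem_insert, Finset.mem_singleton, not_or, eq_div_iff hda] at hx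
    rcases hval with h | h
    · exact hx.1 (by linarith)
    · exact hx.2 (by linarith [mem_singleton_iff.1 h])
  have h0 := (H.mapsTo a ⟨(0, 0), by simp [mem_unitSq], rfl⟩).2.1
  have h1 := (H.mapsTo a ⟨(0, 1), by simp [mem_unitSq], rfl⟩).2.2
  obtain ⟨x, -, hval⟩ := hheight ∅
  simp only [Smap, hd, zero_mul, zero_add, mul_zero, mul_one, mem_insert_iff,
    mem_singleton_iff] at h0 h1 hval hy
  have hb := H.b_pos
  refine ⟨hd, ?_⟩
  rcases hy with rfl | rfl <;> rcases hval with h | h <;> linarith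

theorem exists_Pi_mem_interior (H : IsTriangularCoding b c u v d Pi) (hNc : 1 < N * c) {c₃ : ℝ}
    (hov : HasOverlapBound c b u v d c₃) {μ : Measure (ℕ → Fin N)} [NeZero μ]
    (hna : NullSingletonClass (μ.map fun i => (Pi i).1)) : ∃ i, Pi i ∈ interior unitSq := by
  by_contra! hint
  have hbd (i : ℕ → Fin N) := fst_or_snd_mem_of_notMem_interior (H.Pi_mem_unitSq i) (hint i)
  obtain ⟨y, hy, hinf⟩ := exists_infinite_horizontal_slice hna H.continuous_Pi.measurable hbd
  have hhor := H.horizontal_of_infinite_slice hbd hy hinf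
  exact not_horizontal_of_hasOverlapBound H.b_pos H.b_lt_c H.c_lt_one hNc H.mapsTo hov _
    ⟨fun a => (hhor a).1, fun a => (hhor a).2⟩

end IsTriangularCoding

/-! ### Words well inside the square -/

section InnerWords

/-- A word `w` is inner if every point of the attractor whose code begins with `w` has a
neighbourhood in the square of radius `2 (σ + 1) b ^ |w|`, where `σ` is the shear bound. -/
def IsInnerWord {N : ℕ} (b c : ℝ) (d : Fin N → ℝ) (Pi : (ℕ → Fin N) → ℝ × ℝ) {p : ℕ}
    (w : Fin p → Fin N) : Prop :=
  ∀ i, wordPrefix p i = w →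
    Metric.closedBall (Pi i) (2 * (shearBound b c d + 1) * b ^ p) ⊆ unitSq

/-- The infinite words in which `w` occurs in every window `[q - h, q)` with `h ≤ q ≤ n`. -/
def recurrentWords {α : Type*} {p : ℕ} (w : Fin p → α) (h n : ℕ) : Set (ℕ → α) :=
  {i | ∀ q, h ≤ q → q ≤ n → ∃ l, q ≤ l + h ∧ l + p ≤ q ∧ wordPrefix p (wordShift l i) = w}

/-- The pairs of codes, the first of which is in `G`, of points whose coordinates differ by at
most `ρ` and `r` respectively. -/
def closePairs {X : Type*} (Pi : X → ℝ × ℝ) (G : Set X) (ρ r : ℝ) : Set (X × X) :=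
  {x | x.1 ∈ G ∧ |(Pi x.1).1 - (Pi x.2).1| ≤ ρ ∧ |(Pi x.1).2 - (Pi x.2).2| ≤ r}

/-- The close pairs of infinite words with distinct first letters. -/
def splitPairs {α : Type*} (Pi : (ℕ → α) → ℝ × ℝ) (G : Set (ℕ → α)) (ρ r : ℝ) :
    Set ((ℕ → α) × (ℕ → α)) :=
  {x ∈ closePairs Pi G ρ r | x.1 0 ≠ x.2 0}

section Combinatorics

variable {α : Type*} {p h m n k : ℕ} {w : Fin p → α} {i j : ℕ → α}

theorem wordPrefix_wordShift_congr (hk : k + p ≤ m) (h : wordPrefix m i = wordPrefix m j) :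
    wordPrefix p (wordShift k i) = wordPrefix p (wordShift k j) :=
  wordPrefix_eq_iff.2 fun l hl => wordPrefix_eq_iff.1 h (l + k) (by omega)

theorem mem_recurrentWords_of_wordPrefix_eq (hi : i ∈ recurrentWords w h n)
    (hij : wordPrefix n i = wordPrefix n j) : j ∈ recurrentWords w h n := fun q hhq hqn => by
  obtain ⟨l, hql, hlq, hl⟩ := hi q hhq hqn
  exact ⟨l, hql, hlq, (wordPrefix_wordShift_congr (hlq.trans hqn) hij).symm.trans hl⟩

theorem recurrentWords_anti (hmn : m ≤ n) : recurrentWords w h n ⊆ recurrentWords w h m :=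
  fun _ hi q hhq hqm => hi q hhq (hqm.trans hmn)

theorem wordShift_mem_recurrentWords (hkn : k ≤ n) (hi : i ∈ recurrentWords w h n) :
    wordShift k i ∈ recurrentWords w h (n - k) := fun q hhq hqn => by
  obtain ⟨l, hql, hlq, hl⟩ := hi (q + k) (by omega) (by omega)
  refine ⟨l - k, by omega, by omega, ?_⟩
  rwa [wordShift_wordShift, Nat.sub_add_cancel (by omega)]

theorem splitPairs_subset {Pi : (ℕ → α) → ℝ × ℝ} {G G' : Set (ℕ → α)} {ρ ρ' r r' : ℝ}
    (hG : G ⊆ G') (hρ : ρ ≤ ρ') (hr : r ≤ r') : splitPairs Pi G ρ r ⊆ splitPairs Pi G' ρ' r' :=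
  fun _ hx => ⟨⟨hG hx.1.1, hx.1.2.1.trans hρ, hx.1.2.2.trans hr⟩, hx.2⟩

end Combinatorics

variable {N : ℕ} {b c : ℝ} {u v d : Fin N → ℝ} {Pi : (ℕ → Fin N) → ℝ × ℝ}

theorem abs_le_of_abs_linear_le (hb : 0 < b) (hbc : b < c) (w : List (Fin N)) {X Y ρ r : ℝ}
    (hX : |c ^ w.length * X| ≤ ρ) (hY : |shear b c d w * X + b ^ w.length * Y| ≤ r) :
    |X| ≤ ρ / c ^ w.length ∧ |Y| ≤ (shearBound b c d * ρ + r) / b ^ w.length := by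
  have hcw : 0 < c ^ w.length := pow_pos (hb.trans hbc) _
  have hbw : 0 < b ^ w.length := pow_pos hb _
  rw [abs_mul, abs_of_pos hcw] at hX
  have hshear : |shear b c d w * X| ≤ shearBound b c d * ρ :=
    calc |shear b c d w * X| ≤ shearBound b c d * c ^ w.length * |X| := by
          rw [abs_mul]; gcongr; exact abs_shear_le hb hbc w
      _ = shearBound b c d * (c ^ w.length * |X|) := by ring
      _ ≤ shearBound b c d * ρ := mul_le_mul_of_nonneg_left hX (shearBound_nonneg hbc)
  refine ⟨(le_div_iff₀' hcw).2 hX, (le_div_iff₀' hbw).2 ?_⟩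
  rw [← abs_of_pos hbw, ← abs_mul]
  calc |b ^ w.length * Y|
      = |(shear b c d w * X + b ^ w.length * Y) - shear b c d w * X| := by ring_nf
    _ ≤ |shear b c d w * X + b ^ w.length * Y| + |shear b c d w * X| := abs_sub _ _
    _ ≤ shearBound b c d * ρ + r := by linarith

theorem mem_Sword_image_closedBall (hb : 0 < b) (hbc : b < c) (w : List (Fin N)) {p q : ℝ × ℝ}
    {ρ r R : ℝ} (hx : |q.1 - (Sword c b u v d w p).1| ≤ ρ)
    (hy : |q.2 - (Sword c b u v d w p).2| ≤ r) (hρ : ρ / c ^ w.length ≤ R)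
    (hr : (shearBound b c d * ρ + r) / b ^ w.length ≤ R) :
    q ∈ Sword c b u v d w '' Metric.closedBall p R := by
  have hcw : c ^ w.length ≠ 0 := (pow_pos (hb.trans hbc) _).ne'
  have hbw : b ^ w.length ≠ 0 := (pow_pos hb _).ne'
  let X := (q.1 - (Sword c b u v d w p).1) / c ^ w.length
  let Y := (q.2 - (Sword c b u v d w p).2 - shear b c d w * X) / b ^ w.length
  have hX : c ^ w.length * X = q.1 - (Sword c b u v d w p).1 := mul_div_cancel₀ _ hcw
  have hY : shear b c d w * X + b ^ w.length * Y = q.2 - (Sword c b u v d w p).2 := by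
    rw [mul_div_cancel₀ _ hbw]; ring
  obtain ⟨hXR, hYR⟩ := abs_le_of_abs_linear_le hb hbc w (hX ▸ hx) (hY ▸ hy)
  refine ⟨p + (X, Y), ?_, Prod.ext ?_ ?_⟩
  · rw [Metric.mem_closedBall, dist_self_add_left]
    exact max_le (hXR.trans hρ) (hYR.trans hr)
  · have h := Sword_fst_sub (c := c) (b := b) (u := u) (v := v) (d := d) w (p + (X, Y)) p
    rw [Prod.fst_add, add_sub_cancel_left, hX] at h
    linarith
  · have h := Sword_snd_sub (c := c) (b := b) (u := u) (v := v) (d := d) w (p + (X, Y)) p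
    rw [Prod.fst_add, Prod.snd_add, add_sub_cancel_left, add_sub_cancel_left, hY] at h
    linarith

namespace IsTriangularCoding

theorem exists_isInnerWord (H : IsTriangularCoding b c u v d Pi) {z : ℕ → Fin N}
    (hz : Pi z ∈ interior unitSq) : ∃ p, 0 < p ∧ ∃ w : Fin p → Fin N, IsInnerWord b c d Pi w := by
  obtain ⟨ε, hε, hball⟩ := Metric.isOpen_iff.1 isOpen_interior _ hz
  have hσ := shearBound_nonneg (d := d) H.b_lt_c
  have hlim : Tendsto (fun m : ℕ => 3 * (shearBound b c d + 1) * c ^ m) atTop (𝓝 0) := by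
    simpa only [mul_zero] using
      (tendsto_pow_atTop_nhds_zero_of_lt_one H.c_pos.le H.c_lt_one).const_mul _
  obtain ⟨p, hp, hp0⟩ := ((hlim.eventually_lt_const hε).and (eventually_gt_atTop 0)).exists
  refine ⟨p, hp0, wordPrefix p z, fun i hi => ?_⟩
  refine (Metric.closedBall_subset_ball' ?_).trans (hball.trans interior_subset)
  calc 2 * (shearBound b c d + 1) * b ^ p + dist (Pi i) (Pi z)
      ≤ 2 * (shearBound b c d + 1) * c ^ p + (shearBound b c d + 1) * c ^ p := by
        have hb := H.b_pos.le
        have hbc := H.b_lt_c.le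
        gcongr
        exact H.dist_Pi_le hi
    _ = 3 * (shearBound b c d + 1) * c ^ p := by ring
    _ < ε := hp

theorem abs_Pi_wordShift_sub_le (H : IsTriangularCoding b c u v d Pi) {k : ℕ} {i j : ℕ → Fin N}
    (hij : wordPrefix k i = wordPrefix k j) {ρ r : ℝ} (hx : |(Pi i).1 - (Pi j).1| ≤ ρ)
    (hy : |(Pi i).2 - (Pi j).2| ≤ r) :
    |(Pi (wordShift k i)).1 - (Pi (wordShift k j)).1| ≤ ρ / c ^ k ∧
      |(Pi (wordShift k i)).2 - (Pi (wordShift k j)).2| ≤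
        (shearBound b c d * ρ + r) / b ^ k := by
  rw [H.Pi_fst_sub hij] at hx
  rw [H.Pi_snd_sub hij] at hy
  simpa only [length_prefixWord] using abs_le_of_abs_linear_le H.b_pos H.b_lt_c (prefixWord i k)
    (by rwa [length_prefixWord]) (by rwa [length_prefixWord])

/-- An inner word ending before time `m` absorbs perturbations of size `b ^ m`. -/
theorem Pi_mem_parallelogram_of_isInnerWord (H : IsTriangularCoding b c u v d Pi) {p : ℕ}
    {w : Fin p → Fin N} (hw : IsInnerWord b c d Pi w) {i j : ℕ → Fin N} {l m : ℕ}
    (hl : wordPrefix p (wordShift l i) = w) (hlm : l + p ≤ m)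
    (hx : |(Pi i).1 - (Pi j).1| ≤ b ^ m)
    (hy : |(Pi i).2 - (Pi j).2| ≤ (shearBound b c d + 1) * b ^ m) :
    Pi j ∈ parallelogram c b u v d i l := by
  have hb := H.b_pos
  have hbl : 0 < b ^ l := pow_pos hb l
  have hσ := shearBound_nonneg (d := d) H.b_lt_c
  have hpow : b ^ m / b ^ l ≤ b ^ p := by
    rw [div_le_iff₀ hbl, ← pow_add]
    exact pow_le_pow_of_le_one hb.le H.b_lt_one.le (by omega)
  rw [abs_sub_comm, H.Pi_eq_Sword l i] at hx hy
  refine image_mono (hw _ hl) (mem_Sword_image_closedBall hb H.b_lt_c _ hx hy ?_ ?_) <;>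
    rw [length_prefixWord]
  · calc b ^ m / c ^ l ≤ b ^ m / b ^ l := by gcongr; exact H.b_lt_c.le
      _ ≤ b ^ p := hpow
      _ ≤ 2 * (shearBound b c d + 1) * b ^ p :=
        le_mul_of_one_le_left (by positivity) (by linarith)
  · calc (shearBound b c d * b ^ m + (shearBound b c d + 1) * b ^ m) / b ^ l
        = (2 * shearBound b c d + 1) * (b ^ m / b ^ l) := by ring
      _ ≤ 2 * (shearBound b c d + 1) * b ^ p := by gcongr; linarith

end IsTriangularCoding

end InnerWords

/-! ### The transfer estimate -/

section Transfer

variable {N : ℕ} {b c : ℝ} {u v d : Fin N → ℝ} {Pi : (ℕ → Fin N) → ℝ × ℝ}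
    {μ : Measure (ℕ → Fin N)}

/-- The self-improving estimate for split pairs: pairs that are anisotropically close at scale
`b ^ m` are rare among the pairs at distance `≲ c ^ m`. The constant `K` does not depend on the
window length `h` of the recurrent words. -/
def HasTransferBound (b c : ℝ) (d : Fin N → ℝ) (Pi : (ℕ → Fin N) → ℝ × ℝ)
    (μ : Measure (ℕ → Fin N)) {p : ℕ} (w : Fin p → Fin N) (K θ : ℝ) : Prop :=
  ∀ h m, h ≤ m → ∀ ρ, 0 ≤ ρ → ρ ≤ b ^ m →
    (μ.prod μ).real
        (splitPairs Pi (recurrentWords w h m) ρ ((shearBound b c d + 1) * b ^ m)) ≤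
      K * (b ^ h)⁻¹ * (b ^ m * ρ / (c ^ m) ^ 2) ^ θ *
        (μ.prod μ).real (splitPairs Pi (recurrentWords w h m)
          (3 * (shearBound b c d + 1) * c ^ m) (3 * (shearBound b c d + 1) * c ^ m))

namespace IsTriangularCoding

theorem mem_splitPairs_of_wordPrefix_eq (H : IsTriangularCoding b c u v d Pi) {p h m : ℕ}
    {w : Fin p → Fin N} (hm : 0 < m) {ρ : ℝ} (hρ : ρ ≤ b ^ m)
    {x y : (ℕ → Fin N) × (ℕ → Fin N)}
    (hx : x ∈ splitPairs Pi (recurrentWords w h m) ρ ((shearBound b c d + 1) * b ^ m))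
    (h₁ : wordPrefix m y.1 = wordPrefix m x.1) (h₂ : wordPrefix m y.2 = wordPrefix m x.2) :
    y ∈ splitPairs Pi (recurrentWords w h m)
      (3 * (shearBound b c d + 1) * c ^ m) (3 * (shearBound b c d + 1) * c ^ m) := by
  obtain ⟨⟨hrec, hfst, hsnd⟩, hne⟩ := hx
  have hσ := shearBound_nonneg (d := d) H.b_lt_c
  have hbc : b ^ m ≤ c ^ m := pow_le_pow_left₀ H.b_pos.le H.b_lt_c.le m
  have hσc : c ^ m ≤ (shearBound b c d + 1) * c ^ m :=
    le_mul_of_one_le_left (pow_pos H.c_pos m).le (by linarith)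
  have hσbc : (shearBound b c d + 1) * b ^ m ≤ (shearBound b c d + 1) * c ^ m := by gcongr
  have hfst₁ := abs_le.1 (H.abs_Pi_fst_sub_le h₁)
  have hfst₂ := abs_le.1 (H.abs_Pi_fst_sub_le h₂)
  have hsnd₁ := abs_le.1 (H.abs_Pi_snd_sub_le h₁)
  have hsnd₂ := abs_le.1 (H.abs_Pi_snd_sub_le h₂)
  have hfst₃ := abs_le.1 hfst
  have hsnd₃ := abs_le.1 hsnd
  refine ⟨⟨mem_recurrentWords_of_wordPrefix_eq hrec h₁.symm, ?_, ?_⟩, ?_⟩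
  · rw [abs_le]; constructor <;> linarith
  · rw [abs_le]; constructor <;> linarith
  · rwa [wordPrefix_eq_iff.1 h₁ 0 hm, wordPrefix_eq_iff.1 h₂ 0 hm]

/-- Both second points lie in the overlap of the two parallelograms of level `l`, since the inner
word keeps them inside the one of `x.1`. -/
theorem abs_Pi_fst_sub_le_of_mem_splitPairs (H : IsTriangularCoding b c u v d Pi) {c₃ : ℝ}
    (hc₃ : 0 < c₃) (hov : HasOverlapBound c b u v d c₃) {p h m : ℕ} {w : Fin p → Fin N}
    (hw : IsInnerWord b c d Pi w) (hm : h ≤ m) {ρ : ℝ} (hρ : ρ ≤ b ^ m)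
    {x y : (ℕ → Fin N) × (ℕ → Fin N)}
    (hx : x ∈ splitPairs Pi (recurrentWords w h m) ρ ((shearBound b c d + 1) * b ^ m))
    (hy : y ∈ splitPairs Pi (recurrentWords w h m) ρ ((shearBound b c d + 1) * b ^ m))
    (h₁ : wordPrefix m y.1 = wordPrefix m x.1) (h₂ : wordPrefix m y.2 = wordPrefix m x.2) :
    |(Pi y.2).1 - (Pi x.2).1| ≤ c₃ * b ^ (m - h) := by
  obtain ⟨⟨hrec, hxfst, hxsnd⟩, hne⟩ := hx
  obtain ⟨⟨-, hyfst, hysnd⟩, -⟩ := hy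
  obtain ⟨l, hml, hlm, hl⟩ := hrec m hm le_rfl
  have hpar₁ : parallelogram c b u v d y.1 l = parallelogram c b u v d x.1 l :=
    congrArg (Sword c b u v d · '' unitSq)
      (prefixWord_congr (wordPrefix_eq_of_le (by omega) h₁))
  have hpar₂ : parallelogram c b u v d y.2 l = parallelogram c b u v d x.2 l :=
    congrArg (Sword c b u v d · '' unitSq)
      (prefixWord_congr (wordPrefix_eq_of_le (by omega) h₂))
  have hx_mem := H.Pi_mem_parallelogram_of_isInnerWord hw hl hlm (hxfst.trans hρ) hxsnd
  have hy_mem := H.Pi_mem_parallelogram_of_isInnerWord hw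
    ((wordPrefix_wordShift_congr hlm h₁).trans hl) hlm (hyfst.trans hρ) hysnd
  refine (hov l x.1 x.2 hne _ ⟨hpar₁ ▸ hy_mem, hpar₂ ▸ H.Pi_mem_parallelogram y.2 l⟩ _
    ⟨hx_mem, H.Pi_mem_parallelogram x.2 l⟩).trans ?_
  have hbl : b ^ l ≤ b ^ (m - h) :=
    pow_le_pow_of_le_one H.b_pos.le H.b_lt_one.le (by omega)
  gcongr

theorem exists_differenceStrip_of_mem_splitPairs (H : IsTriangularCoding b c u v d Pi) {c₃ : ℝ}
    (hc₃ : 0 < c₃) (hov : HasOverlapBound c b u v d c₃) {p h m : ℕ} {w : Fin p → Fin N}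
    (hw : IsInnerWord b c d Pi w) (hm : h ≤ m) {ρ : ℝ} (hρ : ρ ≤ b ^ m)
    {x : (ℕ → Fin N) × (ℕ → Fin N)}
    (hx : x ∈ splitPairs Pi (recurrentWords w h m) ρ ((shearBound b c d + 1) * b ^ m)) :
    ∃ a κ, ∀ y ∈ splitPairs Pi (recurrentWords w h m) ρ ((shearBound b c d + 1) * b ^ m),
      wordPrefix m y.1 = wordPrefix m x.1 → wordPrefix m y.2 = wordPrefix m x.2 →
        (wordShift m y.1, wordShift m y.2) ∈ differenceStrip (fun i => (Pi i).1) a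
          (2 * (c₃ * b ^ (m - h) / c ^ m)) κ (ρ / c ^ m) := by
  let X (i : ℕ → Fin N) := (Pi i).1
  let L := c₃ * b ^ (m - h) / c ^ m
  have hcm := pow_pos H.c_pos m
  refine ⟨X (wordShift m x.2) - L,
    X (wordShift m x.1) - X (wordShift m x.2) - (X x.1 - X x.2) / c ^ m, fun y hy h₁ h₂ => ?_⟩
  have hfst₁ : (X y.1 - X x.1) / c ^ m = X (wordShift m y.1) - X (wordShift m x.1) := by
    rw [div_eq_iff hcm.ne', mul_comm]; exact H.Pi_fst_sub h₁
  have hfst₂ : (X y.2 - X x.2) / c ^ m = X (wordShift m y.2) - X (wordShift m x.2) := by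
    rw [div_eq_iff hcm.ne', mul_comm]; exact H.Pi_fst_sub h₂
  constructor
  · have hoverlap : |X (wordShift m y.2) - X (wordShift m x.2)| ≤ L := by
      rw [← hfst₂, abs_div, abs_of_pos hcm]
      exact div_le_div_of_nonneg_right
        (H.abs_Pi_fst_sub_le_of_mem_splitPairs hc₃ hov hw hm hρ hx hy h₁ h₂) hcm.le
    have := abs_le.1 hoverlap
    constructor <;> simp only [X, L] at * <;> linarith
  · have hclose : |X y.1 - X y.2| ≤ ρ := hy.1.2.1
    calc |X (wordShift m y.1) - X (wordShift m y.2) -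
          (X (wordShift m x.1) - X (wordShift m x.2) - (X x.1 - X x.2) / c ^ m)|
        = |(X y.1 - X y.2) / c ^ m| := by
          congr 1
          linear_combination hfst₂ - hfst₁
      _ ≤ ρ / c ^ m := by
          rw [abs_div, abs_of_pos hcm]
          gcongr

theorem measureReal_splitPairs_fiber_le (H : IsTriangularCoding b c u v d Pi)
    (hμ : IsUniformBernoulli N μ) {c₃ : ℝ} (hc₃ : 0 < c₃) (hov : HasOverlapBound c b u v d c₃)
    {C θ : ℝ} (hFrost : IsFrostman (μ.map fun i => (Pi i).1) C θ) {p h m : ℕ}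
    {w : Fin p → Fin N} (hw : IsInnerWord b c d Pi w) (hm : h ≤ m) {ρ : ℝ} (hρ0 : 0 ≤ ρ)
    (hρ : ρ ≤ b ^ m) (q : (Fin m → Fin N) × (Fin m → Fin N)) :
    (μ.prod μ).real
        (splitPairs Pi (recurrentWords w h m) ρ ((shearBound b c d + 1) * b ^ m) ∩
          Prod.map (wordPrefix m) (wordPrefix m) ⁻¹' {q}) ≤
      (C * (2 * (ρ / c ^ m)) ^ θ) * (C * (2 * (c₃ * b ^ (m - h) / c ^ m)) ^ θ) *
        (μ.prod μ).real (Prod.map (wordPrefix m) (wordPrefix m) ⁻¹' {q}) := by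
  have hprob := hμ.1
  have hC := hFrost.nonneg
  have hcm := pow_pos H.c_pos m
  have hbmh := pow_pos H.b_pos (m - h)
  have hX : Measurable fun i => (Pi i).1 := measurable_fst.comp H.continuous_Pi.measurable
  rcases eq_empty_or_nonempty
    (splitPairs Pi (recurrentWords w h m) ρ ((shearBound b c d + 1) * b ^ m) ∩
      Prod.map (wordPrefix m) (wordPrefix m) ⁻¹' {q}) with hempty | ⟨x, hx, rfl⟩
  · rw [hempty, measureReal_empty]
    positivity
  obtain ⟨a, κ, hstrip⟩ := H.exists_differenceStrip_of_mem_splitPairs hc₃ hov hw hm hρ hx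
  calc _ ≤ (μ.prod μ).real (Prod.map (wordPrefix m) (wordPrefix m) ⁻¹'
          {(wordPrefix m x.1, wordPrefix m x.2)} ∩ Prod.map (wordShift m) (wordShift m) ⁻¹'
            differenceStrip (fun i => (Pi i).1) a (2 * (c₃ * b ^ (m - h) / c ^ m)) κ
              (ρ / c ^ m)) :=
        measureReal_mono fun y hy => ⟨hy.2, hstrip y hy.1 (Prod.mk_inj.1 hy.2).1
          (Prod.mk_inj.1 hy.2).2⟩
    _ ≤ ((N : ℝ) ^ m)⁻¹ * ((N : ℝ) ^ m)⁻¹ *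
          ((C * (2 * (ρ / c ^ m)) ^ θ) * (C * (2 * (c₃ * b ^ (m - h) / c ^ m)) ^ θ)) := by
        rw [hμ.measureReal_prod_fiber_inter_wordShift _ _
          (measurableSet_differenceStrip hX _ _ _ _)]
        gcongr
        exact hFrost.measureReal_prod_differenceStrip_le hX _ _ (by positivity) (by positivity)
    _ = _ := by
        rw [mul_comm]
        exact congrArg _ (hμ.measureReal_prod_fiber _ _).symm

theorem hasTransferBound (H : IsTriangularCoding b c u v d Pi) (hμ : IsUniformBernoulli N μ)
    {c₃ : ℝ} (hc₃ : 0 < c₃) (hov : HasOverlapBound c b u v d c₃) {C θ : ℝ} (hθ1 : θ ≤ 1)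
    (hFrost : IsFrostman (μ.map fun i => (Pi i).1) C θ) {p : ℕ} (hp : 0 < p)
    {w : Fin p → Fin N} (hw : IsInnerWord b c d Pi w) :
    HasTransferBound b c d Pi μ w (C ^ 2 * (4 * c₃) ^ θ) θ := by
  intro h m hm ρ hρ0 hρ
  have hprob := hμ.1
  have hC := hFrost.nonneg
  have hcm := pow_pos H.c_pos m
  have hbm := pow_pos H.b_pos m
  have hbh := pow_pos H.b_pos h
  have hbmh := pow_pos H.b_pos (m - h)
  have hconst : (C * (2 * (ρ / c ^ m)) ^ θ) * (C * (2 * (c₃ * b ^ (m - h) / c ^ m)) ^ θ) ≤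
      C ^ 2 * (4 * c₃) ^ θ * (b ^ h)⁻¹ * (b ^ m * ρ / (c ^ m) ^ 2) ^ θ :=
    calc _ = C ^ 2 * ((2 * (ρ / c ^ m)) * (2 * (c₃ * b ^ (m - h) / c ^ m))) ^ θ := by
          rw [Real.mul_rpow (x := 2 * (ρ / c ^ m)) (by positivity) (by positivity)]; ring
      _ = C ^ 2 * ((4 * c₃) * (b ^ h)⁻¹ * (b ^ m * ρ / (c ^ m) ^ 2)) ^ θ := by
          rw [pow_sub₀ b H.b_pos.ne' hm]; congr 2; field_simp; ring
      _ = C ^ 2 * (4 * c₃) ^ θ * ((b ^ h)⁻¹) ^ θ * (b ^ m * ρ / (c ^ m) ^ 2) ^ θ := by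
          rw [Real.mul_rpow (by positivity) (by positivity),
            Real.mul_rpow (by positivity) (by positivity)]
          ring
      _ ≤ _ := by
          gcongr
          exact Real.rpow_le_self_of_one_le
            (one_le_inv₀ hbh |>.2 (pow_le_one₀ H.b_pos.le H.b_lt_one.le)) hθ1
  refine (measureReal_le_mul_of_fiberwise
    ((measurable_wordPrefix m).prodMap (measurable_wordPrefix m)) (by positivity) ?_
    (H.measureReal_splitPairs_fiber_le hμ hc₃ hov hFrost hw hm hρ0 hρ)).trans
    (mul_le_mul_of_nonneg_right hconst measureReal_nonneg)
  intro x hx y hyx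
  obtain ⟨l, -, hlm, -⟩ := hx.1.1 m hm le_rfl
  exact H.mem_splitPairs_of_wordPrefix_eq (by omega) hρ hx (Prod.mk_inj.1 hyx).1
    (Prod.mk_inj.1 hyx).2

end IsTriangularCoding

end Transfer

/-! ### The measure of close pairs -/

section Energy

theorem exists_first_ne {α : Type*} {m : ℕ} {i j : ℕ → α} (h : wordPrefix m i ≠ wordPrefix m j) :
    ∃ k < m, wordPrefix k i = wordPrefix k j ∧ i k ≠ j k := by
  classical
  have hex : ∃ k, k < m ∧ i k ≠ j k := by
    simpa only [ne_eq, wordPrefix_eq_iff, not_forall, exists_prop] using h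
  refine ⟨Nat.find hex, (Nat.find_spec hex).1, wordPrefix_eq_iff.2 fun l hl => ?_,
    (Nat.find_spec hex).2⟩
  by_contra hne
  exact Nat.find_min hex hl ⟨hl.trans (Nat.find_spec hex).1, hne⟩

/-- If the mass `D m (b ^ m)` improves on `D m (A c ^ m)` by the factor `(b / c) ^ (m α)`, then
iterating `b ^ m ≤ A c ^ m` gives any power law with exponent below `α`. -/
theorem le_div_rpow_of_self_improving {b c K A α γ : ℝ} (hb : 0 < b) (hbc : b < c) (hc1 : c < 1)
    (hK : 0 ≤ K) (hA : 1 ≤ A) (hγ : 0 ≤ γ) {L : ℕ} {D : ℕ → ℝ → ℝ} (hD1 : ∀ m r, D m r ≤ 1)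
    (hmono : ∀ m r r', r ≤ r' → D (m + 1) r ≤ D m r')
    (himprove : ∀ m, L ≤ m → D m (b ^ m) ≤ K * ((b / c) ^ m) ^ α * D m (A * c ^ m))
    (hsmall : ∀ m, L ≤ m → K * A ^ γ * ((b / c) ^ m) ^ (α - γ) ≤ b ^ γ) (m : ℕ) :
    ∀ r, b ^ m ≤ r → D m r ≤ (r / b ^ L) ^ γ := by
  have hc := hb.trans hbc
  have hbL : 0 < b ^ L := pow_pos hb L
  have hstart (m : ℕ) (hm : m ≤ L) (r : ℝ) (hr : b ^ m ≤ r) : D m r ≤ (r / b ^ L) ^ γ :=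
    (hD1 m r).trans (Real.one_le_rpow ((one_le_div hbL).2
      ((pow_le_pow_of_le_one hb.le (hbc.trans hc1).le hm).trans hr)) hγ)
  induction m with
  | zero => exact hstart 0 L.zero_le
  | succ m ih =>
    intro r hr
    rcases le_or_gt (m + 1) L with hmL | hLm
    · exact hstart (m + 1) hmL r hr
    rcases le_or_gt (b ^ m) r with hmr | hrm
    · exact (hmono m r r le_rfl).trans (ih r hmr)
    have hcm := pow_pos hc m
    have hq : 0 < (b / c) ^ m := pow_pos (div_pos hb hc) m
    have hscale : b ^ m ≤ A * c ^ m :=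
      (pow_le_pow_left₀ hb.le hbc.le m).trans (le_mul_of_one_le_left hcm.le hA)
    calc D (m + 1) r ≤ D m (b ^ m) := hmono _ _ _ hrm.le
      _ ≤ K * ((b / c) ^ m) ^ α * D m (A * c ^ m) := himprove m (by omega)
      _ ≤ K * ((b / c) ^ m) ^ α * (A * c ^ m / b ^ L) ^ γ := by
        gcongr
        exact ih _ hscale
      _ = K * A ^ γ * ((b / c) ^ m) ^ (α - γ) * ((b / c) ^ m * (c ^ m / b ^ L)) ^ γ := by
        rw [Real.rpow_sub hq, Real.mul_rpow hq.le (by positivity), mul_div_assoc,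
          Real.mul_rpow (by linarith) (by positivity)]
        field_simp
      _ ≤ b ^ γ * ((b / c) ^ m * (c ^ m / b ^ L)) ^ γ := by
        gcongr
        exact hsmall m (by omega)
      _ = (b ^ (m + 1) / b ^ L) ^ γ := by
        rw [← Real.mul_rpow hb.le (by positivity), div_pow, pow_succ]
        congr 1
        field_simp
      _ ≤ (r / b ^ L) ^ γ := by gcongr

theorem rpow_le_mul_rpow_sub_one {x y θ : ℝ} (hx : 0 < x) (hxy : x ≤ y) (hθ : θ ≤ 1) :
    y ^ θ ≤ y * x ^ (θ - 1) := by
  have hy := hx.trans_le hxy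
  calc y ^ θ = y * y ^ (θ - 1) := by rw [Real.rpow_sub_one hy.ne', mul_div_cancel₀ _ hy.ne']
    _ ≤ y * x ^ (θ - 1) := mul_le_mul_of_nonneg_left
      (Real.rpow_le_rpow_of_nonpos hx hxy (by linarith)) hy.le

theorem div_sq_rpow_mul_rpow_le {x y X θ γ : ℝ} (hx : 0 < x) (hxy : x ≤ y) (hX : x ^ 2 ≤ X)
    (hθ : θ ≤ 1) (hγ : γ ≤ 2 * θ) : (X / y ^ 2) ^ θ * y ^ γ ≤ X * x ^ (γ - 2) := by
  have hy := hx.trans_le hxy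
  have hX0 : 0 < X := (pow_pos hx 2).trans_le hX
  calc (X / y ^ 2) ^ θ * y ^ γ = X ^ θ * y ^ (γ - 2 * θ) := by
        rw [Real.div_rpow hX0.le (by positivity), Real.rpow_sub hy, Real.rpow_mul hy.le,
          Real.rpow_two]
        ring
    _ ≤ X * (x ^ 2) ^ (θ - 1) * x ^ (γ - 2 * θ) := mul_le_mul
      (rpow_le_mul_rpow_sub_one (by positivity) hX hθ)
      (Real.rpow_le_rpow_of_nonpos hx hxy (by linarith)) (by positivity) (by positivity)
    _ = X * x ^ (γ - 2) := by
      rw [← Real.rpow_two, ← Real.rpow_mul hx.le, mul_assoc, ← Real.rpow_add hx]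
      ring_nf

/-- A pair of words with common prefix of length `k` is counted with weight `N ^ (-k)`; this
matches the area of a rectangle of sides `b ^ (n - k)` and `b ^ n / c ^ k`. -/
theorem inv_pow_mul_area_le {N : ℕ} {b c τ s : ℝ} (hb : 0 < b) (hb1 : b < 1) (hc : 0 < c)
    (hN : N ≠ 0) (hτ : b ^ τ = ((N : ℝ) * c)⁻¹) (hs2 : s ≤ 2) (hsτ : s ≤ 1 + τ) {k n : ℕ}
    (hk : k ≤ n) : ((N : ℝ) ^ k)⁻¹ * (b ^ (n - k) * (b ^ n / c ^ k)) ≤ (b ^ n) ^ s := by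
  have hbn := pow_pos hb n
  have hbn1 : b ^ n ≤ 1 := pow_le_one₀ hb.le hb1.le
  have hform : ((N : ℝ) ^ k)⁻¹ * (b ^ (n - k) * (b ^ n / c ^ k)) =
      (b ^ n) ^ 2 * ((N * c * b) ^ k)⁻¹ := by
    rw [mul_pow, mul_pow, pow_sub₀ b hb.ne' hk]
    field_simp
  rw [hform]
  rcases le_or_gt 1 (N * c * b) with h | h
  · calc (b ^ n) ^ 2 * ((N * c * b) ^ k)⁻¹ ≤ (b ^ n) ^ 2 :=
          mul_le_of_le_one_right (by positivity) (inv_le_one_of_one_le₀ (one_le_pow₀ h))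
      _ = (b ^ n) ^ (2 : ℝ) := (Real.rpow_two _).symm
      _ ≤ (b ^ n) ^ s := Real.rpow_le_rpow_of_exponent_ge hbn hbn1 hs2
  · calc (b ^ n) ^ 2 * ((N * c * b) ^ k)⁻¹ ≤ (b ^ n) ^ 2 * ((N * c * b) ^ n)⁻¹ := by
          gcongr ?_ * ?_⁻¹
          exact pow_le_pow_of_le_one (by positivity) h.le hk
      _ = b ^ n * (((N : ℝ) * c)⁻¹) ^ n := by
          rw [mul_pow (N * c : ℝ) b, inv_pow]
          field_simp
      _ = (b ^ n) ^ (1 + τ) := by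
          rw [← hτ, Real.rpow_add hbn, Real.rpow_one, Real.rpow_pow_comm hb.le]
      _ ≤ (b ^ n) ^ s := Real.rpow_le_rpow_of_exponent_ge hbn hbn1 hsτ

theorem mul_mul_add_le_add_mul_mul {n X Y B : ℝ} (hn : 0 ≤ n) (hX : 0 ≤ X) (hY : 0 ≤ Y)
    (hB : 1 ≤ B) : n * (X * B) + Y ≤ (X + Y) * (n + 1) * B :=
  calc n * (X * B) + Y ≤ n * (X * B) + (X * B + Y * n * B + Y * B) := by
        have := le_mul_of_one_le_right hY hB
        gcongr
        linarith [(by positivity : 0 ≤ X * B + Y * n * B)]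
    _ = (X + Y) * (n + 1) * B := by ring

theorem exists_forall_mul_pow_le {b x K : ℝ} (hb : 0 < b) (hb1 : b < 1) (hK : 0 ≤ K) (hx : 0 ≤ x)
    (hx1 : x < 1) :
    ∃ q : ℕ, 0 < q ∧ ∀ h m, q * (h + 2) ≤ m → K * (b ^ h)⁻¹ * x ^ m ≤ b ^ 2 := by
  obtain ⟨q, hq, hq0⟩ := (((tendsto_pow_atTop_nhds_zero_of_lt_one hx hx1).eventually_le_const
    (by positivity : 0 < b / (K + 1))).and (eventually_gt_atTop 0)).exists
  refine ⟨q, hq0, fun h m hm => ?_⟩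
  have hpow : x ^ m ≤ b ^ (h + 2) * (K + 1)⁻¹ :=
    calc x ^ m ≤ x ^ (q * (h + 2)) := pow_le_pow_of_le_one hx hx1.le hm
      _ ≤ (b / (K + 1)) ^ (h + 2) := by
        rw [pow_mul]
        gcongr
      _ = b ^ (h + 2) * (K + 1)⁻¹ ^ (h + 2) := by rw [div_eq_mul_inv, mul_pow]
      _ ≤ b ^ (h + 2) * (K + 1)⁻¹ := by
        gcongr
        exact pow_le_of_le_one (by positivity) (inv_le_one_of_one_le₀ (by linarith)) (by omega)
  calc K * (b ^ h)⁻¹ * x ^ m ≤ K * (b ^ h)⁻¹ * (b ^ (h + 2) * (K + 1)⁻¹) := by gcongr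
    _ = K / (K + 1) * b ^ 2 := by rw [pow_add]; field_simp
    _ ≤ b ^ 2 := mul_le_of_le_one_left (by positivity)
      (div_le_one_of_le₀ (by linarith) (by linarith))

variable {N : ℕ} {b c : ℝ} {u v d : Fin N → ℝ} {Pi : (ℕ → Fin N) → ℝ × ℝ}
  {μ : Measure (ℕ → Fin N)} {p : ℕ} {w : Fin p → Fin N}

namespace IsTriangularCoding

theorem measureReal_splitPairs_le (H : IsTriangularCoding b c u v d Pi) [IsProbabilityMeasure μ]
    {K θ : ℝ} (hK : 0 ≤ K) (hT : HasTransferBound b c d Pi μ w K θ) {γ : ℝ} (hγ : 0 ≤ γ)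
    {h L : ℕ} (hhL : h ≤ L)
    (hsmall : ∀ m, L ≤ m → K * (b ^ h)⁻¹ * (3 * (shearBound b c d + 1)) ^ γ *
      ((b / c) ^ m) ^ (2 * θ - γ) ≤ b ^ γ) {m : ℕ} {r : ℝ} (hr : b ^ m ≤ r) :
    (μ.prod μ).real (splitPairs Pi (recurrentWords w h m) r r) ≤ (r / b ^ L) ^ γ := by
  have hσ := shearBound_nonneg (d := d) H.b_lt_c
  have hbh := pow_pos H.b_pos h
  refine le_div_rpow_of_self_improving
    (D := fun m r => (μ.prod μ).real (splitPairs Pi (recurrentWords w h m) r r))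
    H.b_pos H.b_lt_c H.c_lt_one (mul_nonneg hK (by positivity))
    (A := 3 * (shearBound b c d + 1)) (by linarith) hγ (fun _ _ => measureReal_le_one)
    (fun m r r' hr => measureReal_mono
      (splitPairs_subset (recurrentWords_anti (Nat.le_succ m)) hr hr))
    (fun m hm => ?_) hsmall m r hr
  have hbm := pow_pos H.b_pos m
  have hfactor : (b ^ m * b ^ m / (c ^ m) ^ 2) ^ θ = ((b / c) ^ m) ^ (2 * θ) := by
    rw [Real.rpow_mul (pow_nonneg (div_nonneg H.b_pos.le H.c_pos.le) m), Real.rpow_two, div_pow,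
      div_pow, sq (b ^ m)]
  rw [← hfactor]
  exact (measureReal_mono (splitPairs_subset Subset.rfl le_rfl
    (le_mul_of_one_le_left hbm.le (by linarith)))).trans (hT h m (hhL.trans hm) _ hbm.le le_rfl)

theorem wordShift_mem_splitPairs (H : IsTriangularCoding b c u v d Pi) {h k n : ℕ} (hk : k ≤ n)
    {x : (ℕ → Fin N) × (ℕ → Fin N)}
    (hx : x ∈ closePairs Pi (recurrentWords w h n) (b ^ n) (b ^ n))
    (hpre : wordPrefix k x.1 = wordPrefix k x.2) (hne : x.1 k ≠ x.2 k) :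
    (wordShift k x.1, wordShift k x.2) ∈ splitPairs Pi (recurrentWords w h (n - k))
      (b ^ n / c ^ k) ((shearBound b c d + 1) * b ^ (n - k)) := by
  obtain ⟨hX, hY⟩ := H.abs_Pi_wordShift_sub_le hpre hx.2.1 hx.2.2
  refine ⟨⟨wordShift_mem_recurrentWords hk hx.1, hX, hY.trans_eq ?_⟩, ?_⟩
  · rw [pow_sub₀ b H.b_pos.ne' hk]
    ring
  · simpa only [wordShift, zero_add] using hne

theorem measureReal_closePairs_le_sum (H : IsTriangularCoding b c u v d Pi)
    (hμ : IsUniformBernoulli N μ) {C θ : ℝ} (hFrost : IsFrostman (μ.map fun i => (Pi i).1) C θ)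
    {h n : ℕ} (hn : h ≤ n) :
    (μ.prod μ).real (closePairs Pi (recurrentWords w h n) (b ^ n) (b ^ n)) ≤
      (∑ k ∈ Finset.range (n - h), ((N : ℝ) ^ k)⁻¹ *
        (μ.prod μ).real (splitPairs Pi (recurrentWords w h (n - k)) (b ^ n / c ^ k)
          ((shearBound b c d + 1) * b ^ (n - k)))) +
      ((N : ℝ) ^ (n - h))⁻¹ * (C ^ 2 * (2 * (b ^ n / c ^ (n - h))) ^ θ) := by
  have hprob := hμ.1
  have hc := pow_pos H.c_pos (n - h)
  have hbn := pow_pos H.b_pos n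
  have hX : Measurable fun i => (Pi i).1 := measurable_fst.comp H.continuous_Pi.measurable
  let P := closePairs Pi (recurrentWords w h n) (b ^ n) (b ^ n)
  let B (k : ℕ) := {x ∈ P | wordPrefix k x.1 = wordPrefix k x.2 ∧ x.1 k ≠ x.2 k}
  let E := {x ∈ P | wordPrefix (n - h) x.1 = wordPrefix (n - h) x.2}
  have hcover : P ⊆ (⋃ k ∈ Finset.range (n - h), B k) ∪ E := fun x hx => by
    by_cases hE : wordPrefix (n - h) x.1 = wordPrefix (n - h) x.2
    · exact Or.inr ⟨hx, hE⟩
    · obtain ⟨k, hk, hpre, hne⟩ := exists_first_ne hE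
      exact Or.inl (mem_biUnion (Finset.mem_range.2 hk) ⟨hx, hpre, hne⟩)
  refine (measureReal_mono hcover).trans ((measureReal_union_le _ _).trans
    (add_le_add ((measureReal_biUnion_finset_le _ _).trans (Finset.sum_le_sum fun k hk => ?_)) ?_))
  · have hkn : k ≤ n := by rw [Finset.mem_range] at hk; omega
    refine (hμ.measureReal_le_of_common_prefix k (measurableSet_toMeasurable (μ.prod μ) _)
      fun x hx => ⟨hx.2.1, subset_toMeasurable _ _
        (H.wordShift_mem_splitPairs hkn hx.1 hx.2.1 hx.2.2)⟩).trans_eq ?_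
    rw [Measure.real, measure_toMeasurable, Measure.real]
  · refine (hμ.measureReal_le_of_common_prefix (n - h)
      (measurableSet_differenceStrip hX 0 1 0 (b ^ n / c ^ (n - h))) fun x hx =>
        ⟨hx.2, ?_, ?_⟩).trans (mul_le_mul_of_nonneg_left
          ((hFrost.measureReal_prod_differenceStrip_le hX 0 0 zero_le_one
            (by positivity)).trans_eq ?_) (by positivity))
    · simpa only [zero_add, mem_Icc] using
        (mem_unitSq.1 (H.Pi_mem_unitSq (wordShift (n - h) x.2))).1
    · simpa only [sub_zero] using (H.abs_Pi_wordShift_sub_le hx.2 hx.1.2.1 hx.1.2.2).1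
    · rw [Real.one_rpow]
      ring

theorem inv_pow_mul_measureReal_splitPairs_le (H : IsTriangularCoding b c u v d Pi) (hN : N ≠ 0)
    {K θ : ℝ} (hK : 0 ≤ K) (hθ1 : θ ≤ 1) (hT : HasTransferBound b c d Pi μ w K θ) {γ : ℝ}
    (hγ : γ ≤ 2 * θ) {h L : ℕ}
    (hpower : ∀ m r, b ^ m ≤ r →
      (μ.prod μ).real (splitPairs Pi (recurrentWords w h m) r r) ≤ (r / b ^ L) ^ γ)
    {τ s : ℝ} (hτ : b ^ τ = ((N : ℝ) * c)⁻¹) (hs2 : s ≤ 2) (hsτ : s ≤ 1 + τ) {k n : ℕ}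
    (hkn : k + h ≤ n) :
    ((N : ℝ) ^ k)⁻¹ * (μ.prod μ).real (splitPairs Pi (recurrentWords w h (n - k)) (b ^ n / c ^ k)
        ((shearBound b c d + 1) * b ^ (n - k))) ≤
      K * (b ^ h)⁻¹ * (3 * (shearBound b c d + 1) / b ^ L) ^ γ * (b ^ n) ^ (s + γ - 2) := by
  have hσ := shearBound_nonneg (d := d) H.b_lt_c
  obtain ⟨m, rfl⟩ : ∃ m, n = m + k := ⟨n - k, by omega⟩
  have hb := H.b_pos
  have hck := pow_pos H.c_pos k
  have hcm := pow_pos H.c_pos m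
  have hbn := pow_pos hb (m + k)
  have hbcm : b ^ m ≤ c ^ m := pow_le_pow_left₀ hb.le H.b_lt_c.le m
  have hck1 : c ^ k ≤ 1 := pow_le_one₀ H.c_pos.le H.c_lt_one.le
  have hρ : b ^ (m + k) / c ^ k ≤ b ^ m := by
    rw [div_le_iff₀ hck, pow_add]
    gcongr
    exact H.b_lt_c.le
  have hbnm : b ^ (m + k) ≤ b ^ m := pow_le_pow_of_le_one hb.le H.b_lt_one.le (by omega)
  have harea := inv_pow_mul_area_le hb H.b_lt_one H.c_pos hN hτ hs2 hsτ (Nat.le_add_left k m)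
  rw [Nat.add_sub_cancel] at harea ⊢
  have htransfer := hT h m (by omega) _ (by positivity) hρ
  have hsplit := hpower m (3 * (shearBound b c d + 1) * c ^ m)
    (hbcm.trans (le_mul_of_one_le_left hcm.le (by linarith)))
  have hX : (b ^ (m + k)) ^ 2 ≤ b ^ m * (b ^ (m + k) / c ^ k) := by
    rw [sq]
    exact mul_le_mul hbnm (le_div_self hbn.le hck hck1) hbn.le (by positivity)
  have hexp := div_sq_rpow_mul_rpow_le hbn (hbnm.trans hbcm) hX hθ1 hγ
  generalize b ^ m * (b ^ (m + k) / c ^ k) = X at *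
  calc _ ≤ ((N : ℝ) ^ k)⁻¹ * (K * (b ^ h)⁻¹ * (X / (c ^ m) ^ 2) ^ θ *
          (3 * (shearBound b c d + 1) * c ^ m / b ^ L) ^ γ) := by
        have hX0 : 0 ≤ X := (sq_nonneg _).trans hX
        gcongr
        exact htransfer.trans (by gcongr)
    _ = K * (b ^ h)⁻¹ * (3 * (shearBound b c d + 1) / b ^ L) ^ γ *
          (((N : ℝ) ^ k)⁻¹ * ((X / (c ^ m) ^ 2) ^ θ * (c ^ m) ^ γ)) := by
        rw [mul_div_right_comm, Real.mul_rpow (by positivity) hcm.le]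
        ring
    _ ≤ K * (b ^ h)⁻¹ * (3 * (shearBound b c d + 1) / b ^ L) ^ γ *
          (((N : ℝ) ^ k)⁻¹ * (X * (b ^ (m + k)) ^ (γ - 2))) := by gcongr
    _ ≤ _ := by
        rw [← mul_assoc _ X, add_sub_assoc, Real.rpow_add hbn]
        gcongr

theorem inv_pow_mul_strip_le (H : IsTriangularCoding b c u v d Pi) (hN : N ≠ 0) {θ γ : ℝ}
    (hθ1 : θ ≤ 1) (hγ : γ ≤ 2 * θ) {τ s : ℝ} (hτ : b ^ τ = ((N : ℝ) * c)⁻¹) (hs2 : s ≤ 2)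
    (hsτ : s ≤ 1 + τ) (C : ℝ) {h n : ℕ} (hn : h ≤ n) :
    ((N : ℝ) ^ (n - h))⁻¹ * (C ^ 2 * (2 * (b ^ n / c ^ (n - h))) ^ θ) ≤
      2 * C ^ 2 * (b ^ h)⁻¹ * (b ^ n) ^ (s + γ - 2) := by
  have hck := pow_pos H.c_pos (n - h)
  have hbn := pow_pos H.b_pos n
  have hbh := pow_pos H.b_pos h
  have harea := inv_pow_mul_area_le H.b_pos H.b_lt_one H.c_pos hN hτ hs2 hsτ (Nat.sub_le n h)
  rw [Nat.sub_sub_self hn] at harea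
  have hρ : b ^ n ≤ 2 * (b ^ n / c ^ (n - h)) :=
    (le_div_self hbn.le hck (pow_le_one₀ H.c_pos.le H.c_lt_one.le)).trans
      (le_mul_of_one_le_left (by positivity) one_le_two)
  calc _ ≤ ((N : ℝ) ^ (n - h))⁻¹ *
          (C ^ 2 * (2 * (b ^ n / c ^ (n - h)) * (b ^ n) ^ (θ - 1))) := by
        gcongr
        exact rpow_le_mul_rpow_sub_one hbn hρ hθ1
    _ ≤ ((N : ℝ) ^ (n - h))⁻¹ *
          (C ^ 2 * (2 * (b ^ n / c ^ (n - h)) * (b ^ n) ^ (γ - 2))) := by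
        gcongr ?_ * (_ * (_ * ?_))
        exact Real.rpow_le_rpow_of_exponent_ge hbn (pow_le_one₀ H.b_pos.le H.b_lt_one.le)
          (by linarith)
    _ = 2 * C ^ 2 * (b ^ h)⁻¹ * (((N : ℝ) ^ (n - h))⁻¹ *
          (b ^ h * (b ^ n / c ^ (n - h))) * (b ^ n) ^ (γ - 2)) := by
        field_simp
    _ ≤ 2 * C ^ 2 * (b ^ h)⁻¹ * ((b ^ n) ^ s * (b ^ n) ^ (γ - 2)) := by gcongr
    _ = _ := by rw [← Real.rpow_add hbn, add_sub_assoc]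

theorem measureReal_closePairs_le (H : IsTriangularCoding b c u v d Pi)
    (hμ : IsUniformBernoulli N μ) {C K θ : ℝ} (hK : 0 ≤ K) (hθ1 : θ ≤ 1)
    (hFrost : IsFrostman (μ.map fun i => (Pi i).1) C θ)
    (hT : HasTransferBound b c d Pi μ w K θ) {γ : ℝ} (hγ : γ ≤ 2 * θ) {h L : ℕ}
    (hpower : ∀ m r, b ^ m ≤ r →
      (μ.prod μ).real (splitPairs Pi (recurrentWords w h m) r r) ≤ (r / b ^ L) ^ γ)
    {τ s : ℝ} (hτ : b ^ τ = ((N : ℝ) * c)⁻¹) (hs2 : s ≤ 2) (hsτ : s ≤ 1 + τ) {n : ℕ}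
    (hn : h ≤ n) :
    (μ.prod μ).real (closePairs Pi (recurrentWords w h n) (b ^ n) (b ^ n)) ≤
      (n * (K * (3 * (shearBound b c d + 1) / b ^ L) ^ γ) + 2 * C ^ 2) * (b ^ h)⁻¹ *
        (b ^ n) ^ (s + γ - 2) := by
  have hσ := shearBound_nonneg (d := d) H.b_lt_c
  have hbh := pow_pos H.b_pos h
  have hbL := pow_pos H.b_pos L
  have hbn := pow_pos H.b_pos n
  have hsum := Finset.sum_le_card_nsmul (Finset.range (n - h)) _ _ fun k hk =>
    H.inv_pow_mul_measureReal_splitPairs_le hμ.ne_zero hK hθ1 hT hγ hpower hτ hs2 hsτ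
      (by rw [Finset.mem_range] at hk; omega : k + h ≤ n)
  rw [Finset.card_range, nsmul_eq_mul] at hsum
  have hcard : ((n - h : ℕ) : ℝ) ≤ n := Nat.cast_le.2 (n.sub_le h)
  calc _ ≤ _ := H.measureReal_closePairs_le_sum hμ hFrost hn
    _ ≤ n * (K * (b ^ h)⁻¹ * (3 * (shearBound b c d + 1) / b ^ L) ^ γ *
          (b ^ n) ^ (s + γ - 2)) + 2 * C ^ 2 * (b ^ h)⁻¹ * (b ^ n) ^ (s + γ - 2) :=
        add_le_add (hsum.trans (by gcongr))
          (H.inv_pow_mul_strip_le hμ.ne_zero hθ1 hγ hτ hs2 hsτ C hn)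
    _ = _ := by ring

/-- A recursion depth proportional to the window length `h` makes all losses exponential in `h`. -/
theorem exists_measureReal_closePairs_le (H : IsTriangularCoding b c u v d Pi)
    (hμ : IsUniformBernoulli N μ) {C K θ : ℝ} (hK : 0 ≤ K) (hθ1 : θ ≤ 1)
    (hFrost : IsFrostman (μ.map fun i => (Pi i).1) C θ)
    (hT : HasTransferBound b c d Pi μ w K θ) {γ : ℝ} (hγ0 : 0 ≤ γ) (hγ : γ < 2 * θ)
    {τ s : ℝ} (hτ : b ^ τ = ((N : ℝ) * c)⁻¹) (hs2 : s ≤ 2) (hsτ : s ≤ 1 + τ) :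
    ∃ M, 0 ≤ M ∧ ∃ R, 1 ≤ R ∧ ∀ h n, h ≤ n →
      (μ.prod μ).real (closePairs Pi (recurrentWords w h n) (b ^ n) (b ^ n)) ≤
        M * (n + 1) * R ^ h * (b ^ n) ^ (s + γ - 2) := by
  have hprob := hμ.1
  have hb := H.b_pos
  have hbc : 0 < b / c := div_pos hb H.c_pos
  have hσ := shearBound_nonneg (d := d) H.b_lt_c
  set A := 3 * (shearBound b c d + 1)
  have hA0 : 0 ≤ A := by linarith
  obtain ⟨q, hq0, hq⟩ := exists_forall_mul_pow_le hb H.b_lt_one (K := K * A ^ γ) (by positivity)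
    (x := (b / c) ^ (2 * θ - γ)) (by positivity)
    (Real.rpow_lt_one hbc.le ((div_lt_one H.c_pos).2 H.b_lt_c) (by linarith))
  let B := ((b ^ q) ^ γ)⁻¹
  have hB1 : 1 ≤ B := one_le_inv₀ (by positivity) |>.2
    (Real.rpow_le_one (by positivity) (pow_le_one₀ hb.le H.b_lt_one.le) hγ0)
  refine ⟨K * A ^ γ * B ^ 2 + 2 * C ^ 2, by positivity, B / b,
    (one_le_div hb).2 (H.b_lt_one.le.trans hB1), fun h n hn => ?_⟩
  have hsmall (m : ℕ) (hm : q * (h + 2) ≤ m) :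
      K * (b ^ h)⁻¹ * A ^ γ * ((b / c) ^ m) ^ (2 * θ - γ) ≤ b ^ γ :=
    calc _ = K * A ^ γ * (b ^ h)⁻¹ * ((b / c) ^ (2 * θ - γ)) ^ m := by
          rw [Real.rpow_pow_comm hbc.le]; ring
      _ ≤ b ^ 2 := hq h m hm
      _ ≤ b ^ γ := by
        rw [← Real.rpow_two]
        exact Real.rpow_le_rpow_of_exponent_ge hb H.b_lt_one.le (by linarith)
  have hdepth : (A / b ^ (q * (h + 2))) ^ γ = A ^ γ * B ^ 2 * B ^ h := by
    rw [pow_mul, Real.div_rpow hA0 (by positivity), ← Real.rpow_pow_comm (by positivity),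
      div_eq_mul_inv, ← inv_pow]
    ring
  refine (H.measureReal_closePairs_le hμ hK hθ1 hFrost hT hγ.le (fun m r hr =>
    H.measureReal_splitPairs_le hK hT hγ0 (by nlinarith) hsmall hr) hτ hs2 hsτ hn).trans ?_
  have hsum := mul_mul_add_le_add_mul_mul n.cast_nonneg
    (by positivity : 0 ≤ K * A ^ γ * B ^ 2) (by positivity : 0 ≤ 2 * C ^ 2)
    (one_le_pow₀ hB1 (n := h))
  calc (n * (K * (A / b ^ (q * (h + 2))) ^ γ) + 2 * C ^ 2) * (b ^ h)⁻¹ * (b ^ n) ^ (s + γ - 2)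
      = (n * (K * A ^ γ * B ^ 2 * B ^ h) + 2 * C ^ 2) * (b ^ h)⁻¹ * (b ^ n) ^ (s + γ - 2) := by
        rw [hdepth, mul_assoc K, mul_assoc K]
    _ ≤ (K * A ^ γ * B ^ 2 + 2 * C ^ 2) * (n + 1) * B ^ h * (b ^ h)⁻¹ *
          (b ^ n) ^ (s + γ - 2) := by gcongr
    _ = _ := by rw [div_pow, div_eq_mul_inv, ← mul_assoc]

end IsTriangularCoding

end Energy

/-! ### Recurrence of a word -/

section Recurrence

theorem summable_succ_mul_geometric {r : ℝ} (hr0 : 0 ≤ r) (hr1 : r < 1) :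
    Summable fun n : ℕ => ((n : ℝ) + 1) * r ^ n := by
  have hnorm : ‖r‖ < 1 := by rwa [Real.norm_of_nonneg hr0]
  simpa only [add_mul, one_mul, pow_one] using
    (summable_pow_mul_geometric_of_norm_lt_one 1 hnorm).add (summable_geometric_of_lt_one hr0 hr1)

theorem ae_eventually_notMem_of_measureReal_le {X : Type*} [MeasurableSpace X] {ρ : Measure X}
    [IsFiniteMeasure ρ] {s : ℕ → Set X} {g : ℕ → ℝ} (hg : Summable g)
    (hs : ∀ᶠ n in atTop, ρ.real (s n) ≤ g n) : ∀ᵐ x ∂ρ, ∀ᶠ n in atTop, x ∉ s n := by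
  have hsum : Summable fun n => ρ.real (s n) :=
    hg.of_norm_bounded_eventually_nat <| hs.mono fun n hn => by
      rwa [Real.norm_of_nonneg measureReal_nonneg]
  refine ae_eventually_notMem ?_
  simpa only [ofReal_measureReal (measure_ne_top _ _)] using hsum.tsum_ofReal_ne_top

theorem pow_floor_le_inv_mul_rpow {β : ℝ} (hβ0 : 0 < β) (hβ1 : β ≤ 1) (x : ℝ) :
    β ^ ⌊x⌋₊ ≤ β⁻¹ * β ^ x := by
  rw [← Real.rpow_neg_one, ← Real.rpow_add hβ0, ← Real.rpow_natCast]
  refine Real.rpow_le_rpow_of_exponent_ge hβ0 hβ1 ?_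
  linarith [Nat.lt_floor_add_one x]

/-- The infinite words none of whose first `g` consecutive blocks of length `p` is `w`. -/
def avoidingWords {α : Type*} {p : ℕ} (w : Fin p → α) (g : ℕ) : Set (ℕ → α) :=
  {i | ∀ t < g, wordPrefix p (wordShift (p * t) i) ≠ w}

section Sets

variable {α : Type*} {p : ℕ} (w : Fin p → α)

theorem avoidingWords_succ (g : ℕ) :
    avoidingWords w (g + 1) = wordShift p ⁻¹' avoidingWords w g \ wordPrefix p ⁻¹' {w} := by
  ext i
  simp only [avoidingWords, Nat.forall_lt_succ_left', Set.mem_sdiff, mem_preimage,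
    mem_ofPred_eq, mem_singleton_iff, wordShift_wordShift, mul_zero, Nat.mul_succ]
  exact and_comm

theorem compl_recurrentWords_subset (h n : ℕ) :
    (recurrentWords w h n)ᶜ ⊆
      ⋃ a ∈ Finset.range (n + 1), wordShift a ⁻¹' avoidingWords w (h / p) := by
  intro i hi
  simp only [recurrentWords, mem_compl_iff, mem_ofPred_eq] at hi
  push Not at hi
  obtain ⟨q, hhq, hqn, hne⟩ := hi
  refine mem_biUnion (Finset.mem_coe.2 (Finset.mem_range.2 (by lia : q - h < n + 1)))
    fun t ht => ?_
  have hblock : p * t + p ≤ h :=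
    (Nat.mul_le_mul_left p (Nat.succ_le_of_lt ht)).trans (Nat.mul_div_le h p)
  rw [wordShift_wordShift]
  exact hne _ (by lia) (by lia)

variable [MeasurableSpace α] [MeasurableSingletonClass α]

theorem measurableSet_avoidingWords (g : ℕ) : MeasurableSet (avoidingWords w g) := by
  simp only [avoidingWords, ofPred_forall]
  exact .iInter fun t => .iInter fun _ =>
    (measurable_wordShift _ (measurableSet_wordPrefix_fiber w)).compl

theorem measurableSet_recurrentWords (h n : ℕ) : MeasurableSet (recurrentWords w h n) := by
  simp only [recurrentWords, ofPred_forall, ofPred_exists, ofPred_and]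
  exact .iInter fun q => .iInter fun _ => .iInter fun _ => .iUnion fun l =>
    .inter (.const _) (.inter (.const _)
      (measurable_wordShift _ (measurableSet_wordPrefix_fiber w)))

end Sets

namespace IsUniformBernoulli

variable {N : ℕ} {μ : Measure (ℕ → Fin N)} {p : ℕ}

theorem measureReal_preimage_wordShift (hμ : IsUniformBernoulli N μ) (m : ℕ)
    {A : Set (ℕ → Fin N)} (hA : MeasurableSet A) : μ.real (wordShift m ⁻¹' A) = μ.real A := by
  have := hμ.1
  have hN : (N : ℝ) ^ m ≠ 0 := pow_ne_zero _ (Nat.cast_ne_zero.2 hμ.ne_zero)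
  have hpartition := sum_measureReal_preimage_singleton (μ := μ.restrict (wordShift m ⁻¹' A))
    (Finset.univ : Finset (Fin m → Fin N)) (fun w _ => measurableSet_wordPrefix_fiber w)
  simp only [measureReal_restrict_apply (measurableSet_wordPrefix_fiber _),
    hμ.measureReal_fiber_inter_wordShift _ hA, Finset.sum_const, Finset.card_univ,
    Fintype.card_pi_const, Fintype.card_fin, nsmul_eq_mul, Finset.coe_univ, preimage_univ,
    measureReal_restrict_apply .univ, univ_inter] at hpartition
  rw [← hpartition]
  push_cast
  field_simp

theorem measureReal_avoidingWords (hμ : IsUniformBernoulli N μ) (w : Fin p → Fin N) (g : ℕ) :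
    μ.real (avoidingWords w g) = (1 - ((N : ℝ) ^ p)⁻¹) ^ g := by
  have := hμ.1
  induction g with
  | zero => simp [avoidingWords]
  | succ g ih =>
    have hA := measurableSet_avoidingWords w g
    have hsplit := measureReal_inter_add_sdiff (μ := μ)
      (s := wordShift p ⁻¹' avoidingWords w g) (measurableSet_wordPrefix_fiber w)
    rw [inter_comm, hμ.measureReal_fiber_inter_wordShift w hA,
      hμ.measureReal_preimage_wordShift p hA, ← avoidingWords_succ, ih] at hsplit
    rw [pow_succ]
    linarith

theorem measureReal_compl_recurrentWords_le (hμ : IsUniformBernoulli N μ) (w : Fin p → Fin N)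
    (h n : ℕ) :
    μ.real (recurrentWords w h n)ᶜ ≤ (n + 1) * (1 - ((N : ℝ) ^ p)⁻¹) ^ (h / p) := by
  have := hμ.1
  refine (measureReal_mono (compl_recurrentWords_subset w h n) (measure_ne_top _ _)).trans
    ((measureReal_biUnion_finset_le _ _).trans_eq ?_)
  simp only [hμ.measureReal_preimage_wordShift _ (measurableSet_avoidingWords w _),
    hμ.measureReal_avoidingWords, Finset.sum_const, Finset.card_range, nsmul_eq_mul,
    Nat.cast_add, Nat.cast_one]

theorem ae_eventually_mem_recurrentWords (hμ : IsUniformBernoulli N μ) (hp : 0 < p)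
    (w : Fin p → Fin N) {ζ : ℝ} (hζ : 0 < ζ) :
    ∀ᵐ i ∂μ, ∀ᶠ n : ℕ in atTop, i ∈ recurrentWords w ⌊ζ * n⌋₊ n := by
  have := hμ.1
  have hNp : 1 ≤ (N : ℝ) ^ p := one_le_pow₀ (Nat.one_le_cast.2 (Nat.pos_of_ne_zero hμ.ne_zero))
  have hinv : 0 < ((N : ℝ) ^ p)⁻¹ ∧ ((N : ℝ) ^ p)⁻¹ ≤ 1 :=
    ⟨by positivity, inv_le_one_of_one_le₀ hNp⟩
  obtain ⟨β, hβ, hβ1⟩ := exists_between (by linarith : 1 - ((N : ℝ) ^ p)⁻¹ < 1)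
  have hβ0 : 0 < β := by linarith
  have hr0 : 0 ≤ β ^ (ζ / p) := by positivity
  have hr1 : β ^ (ζ / p) < 1 := Real.rpow_lt_one hβ0.le hβ1 (by positivity)
  have hbound (n : ℕ) : μ.real (recurrentWords w ⌊ζ * n⌋₊ n)ᶜ ≤
      β⁻¹ * ((n + 1) * (β ^ (ζ / p)) ^ n) :=
    calc μ.real (recurrentWords w ⌊ζ * n⌋₊ n)ᶜ
        ≤ (n + 1) * (1 - ((N : ℝ) ^ p)⁻¹) ^ (⌊ζ * n⌋₊ / p) :=
          hμ.measureReal_compl_recurrentWords_le w _ n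
      _ ≤ (n + 1) * (β⁻¹ * (β ^ (ζ / p)) ^ n) := by
          gcongr
          rw [← Nat.floor_div_natCast, ← Real.rpow_mul_natCast hβ0.le, div_mul_eq_mul_div]
          exact (pow_le_pow_left₀ (by linarith) hβ.le _).trans
            (pow_floor_le_inv_mul_rpow hβ0 hβ1.le _)
      _ = β⁻¹ * ((n + 1) * (β ^ (ζ / p)) ^ n) := by ring
  simpa only [notMem_compl_iff] using ae_eventually_notMem_of_measureReal_le
    ((summable_succ_mul_geometric hr0 hr1).mul_left β⁻¹) (Eventually.of_forall hbound)

end IsUniformBernoulli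

end Recurrence

/-! ### Bounds for the Hausdorff dimension -/

section HausdorffDimension

section MassDistribution

variable {X : Type*} [MetricSpace X] [MeasurableSpace X] {ρ : Measure X} {b t : ℝ}

theorem mul_measure_closedBall_le_rpow (hb0 : 0 < b) (hb1 : b < 1) (ht : 0 < t) {x : X} {k : ℕ}
    (hx : ∀ n ≥ k, ρ (Metric.closedBall x (b ^ n)) ≤ ENNReal.ofReal ((b ^ n) ^ t)) {r : ℝ}
    (hr0 : 0 ≤ r) (hr : r ≤ b ^ k) :
    ENNReal.ofReal (b ^ t) * ρ (Metric.closedBall x r) ≤ ENNReal.ofReal (r ^ t) := by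
  rcases hr0.eq_or_lt with rfl | hr0
  · have hlim : Tendsto (fun n : ℕ => ENNReal.ofReal ((b ^ n) ^ t)) atTop (𝓝 0) := by
      simpa [Real.zero_rpow ht.ne'] using ENNReal.tendsto_ofReal
        ((tendsto_pow_atTop_nhds_zero_of_lt_one hb0.le hb1).rpow_const (Or.inr ht.le))
    have hzero : ρ (Metric.closedBall x 0) = 0 := by
      refine le_antisymm (ge_of_tendsto hlim ?_) zero_le
      filter_upwards [eventually_ge_atTop k] with n hn
      exact (measure_mono (Metric.closedBall_subset_closedBall (pow_pos hb0 n).le)).trans (hx n hn)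
    rw [hzero, mul_zero]
    exact zero_le
  · obtain ⟨n, hn, hrn⟩ :=
      exists_nat_pow_near_of_lt_one hr0 (hr.trans (pow_le_one₀ hb0.le hb1.le)) hb0 hb1
    have hkn : k ≤ n :=
      Nat.lt_succ_iff.1 ((pow_lt_pow_iff_right_of_lt_one₀ hb0 hb1).1 (hn.trans_le hr))
    calc ENNReal.ofReal (b ^ t) * ρ (Metric.closedBall x r)
        ≤ ENNReal.ofReal (b ^ t) * ENNReal.ofReal ((b ^ n) ^ t) := by
          gcongr
          exact (measure_mono (Metric.closedBall_subset_closedBall hrn)).trans (hx n hkn)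
      _ = ENNReal.ofReal ((b ^ (n + 1)) ^ t) := by
          rw [← ENNReal.ofReal_mul (by positivity), ← Real.mul_rpow hb0.le (by positivity),
            pow_succ']
      _ ≤ ENNReal.ofReal (r ^ t) := by gcongr

variable [BorelSpace X]

theorem smul_restrict_le_hausdorffMeasure (hb0 : 0 < b) (hb1 : b < 1) (ht : 0 < t) {S : Set X}
    {k : ℕ} (hS : ∀ x ∈ S, ∀ n ≥ k,
      ρ (Metric.closedBall x (b ^ n)) ≤ ENNReal.ofReal ((b ^ n) ^ t)) :
    ENNReal.ofReal (b ^ t) • ρ.restrict S ≤ μH[t] := by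
  refine Measure.le_hausdorffMeasure t _ (ENNReal.ofReal (b ^ k))
    (ENNReal.ofReal_pos.2 (pow_pos hb0 k)) fun U hU => ?_
  have hfin : Metric.ediam U ≠ ∞ := ne_top_of_le_ne_top ENNReal.ofReal_ne_top hU
  rw [Measure.smul_apply, smul_eq_mul]
  rcases (closure U ∩ S).eq_empty_or_nonempty with hempty | ⟨x, hxU, hxS⟩
  · have hzero : ρ.restrict S U = 0 := measure_mono_null subset_closure <| by
      rw [Measure.restrict_apply isClosed_closure.measurableSet, hempty, measure_empty]
    rw [hzero, mul_zero]
    exact zero_le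
  · have hball : U ⊆ Metric.closedBall x (Metric.diam U) := fun y hy => by
      rw [← Metric.diam_closure]
      exact Metric.dist_le_diam_of_mem' (by rwa [Metric.ediam_closure]) (subset_closure hy) hxU
    calc ENNReal.ofReal (b ^ t) * ρ.restrict S U
        ≤ ENNReal.ofReal (b ^ t) * ρ (Metric.closedBall x (Metric.diam U)) := by
          gcongr ENNReal.ofReal (b ^ t) * ?_
          exact (Measure.restrict_apply_le _ _).trans (measure_mono hball)
      _ ≤ ENNReal.ofReal (Metric.diam U ^ t) :=
          mul_measure_closedBall_le_rpow hb0 hb1 ht (hS x hxS) Metric.diam_nonneg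
            (ENNReal.toReal_le_of_le_ofReal (pow_pos hb0 k).le hU)
      _ = Metric.ediam U ^ t := by
          rw [← ENNReal.ofReal_rpow_of_nonneg Metric.diam_nonneg ht.le, Metric.diam,
            ENNReal.ofReal_toReal hfin]

theorem ofReal_le_dimH_of_frequently_measure_closedBall_le (hb0 : 0 < b) (hb1 : b < 1)
    (ht : 0 < t) {A : Set X} (hA : ρ Aᶜ = 0)
    (hball : ∃ᵐ x ∂ρ, ∀ᶠ n : ℕ in atTop,
      ρ (Metric.closedBall x (b ^ n)) ≤ ENNReal.ofReal ((b ^ n) ^ t)) :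
    ENNReal.ofReal t ≤ dimH A := by
  let S (k : ℕ) : Set X :=
    {x ∈ A | ∀ n ≥ k, ρ (Metric.closedBall x (b ^ n)) ≤ ENNReal.ofReal ((b ^ n) ^ t)}
  obtain ⟨k, hk⟩ : ∃ k, ρ (S k) ≠ 0 := by
    by_contra! hnull
    refine hball ?_
    filter_upwards [ae_all_iff.2 fun k => measure_eq_zero_iff_ae_notMem.1 (hnull k),
      mem_ae_iff.2 hA] with x hxS hxA hx
    obtain ⟨k, hk⟩ := eventually_atTop.1 hx
    exact hxS k ⟨hxA, hk⟩
  have hle := smul_restrict_le_hausdorffMeasure hb0 hb1 ht (fun x (hx : x ∈ S k) => hx.2) (S k)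
  rw [Measure.smul_apply, Measure.restrict_apply_self, smul_eq_mul] at hle
  have hpos : 0 < ENNReal.ofReal (b ^ t) * ρ (S k) :=
    ENNReal.mul_pos (ENNReal.ofReal_pos.2 (by positivity)).ne' hk
  have hHA : μH[t] A ≠ 0 :=
    ((hpos.trans_le hle).trans_le (measure_mono (sep_subset A _))).ne'
  exact le_dimH_of_hausdorffMeasure_ne_zero (d := t.toNNReal)
    (by rwa [Real.coe_toNNReal _ ht.le])

end MassDistribution

theorem dimH_le_ofReal_of_forall_cover {X : Type*} [EMetricSpace X] {S : Set X}
    {ι : ℕ → Type*} [∀ n, Fintype (ι n)] (U : ∀ n, ι n → Set X) {r : ℕ → ℝ} {s C : ℝ}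
    (hs : 0 ≤ s) (hr0 : ∀ n, 0 ≤ r n) (hr : Tendsto r atTop (𝓝 0))
    (hdiam : ∀ n x, Metric.ediam (U n x) ≤ ENNReal.ofReal (r n)) (hcover : ∀ n, S ⊆ ⋃ x, U n x)
    (hcard : ∀ n, Fintype.card (ι n) * r n ^ s ≤ C) : dimH S ≤ ENNReal.ofReal s := by
  borelize X
  have hr' : Tendsto (fun n => ENNReal.ofReal (r n)) atTop (𝓝 0) := by
    simpa using ENNReal.tendsto_ofReal hr
  have hsum (n : ℕ) : ∑ x, Metric.ediam (U n x) ^ s ≤ ENNReal.ofReal C :=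
    calc ∑ x, Metric.ediam (U n x) ^ s
        ≤ ∑ _x : ι n, ENNReal.ofReal (r n) ^ s :=
          Finset.sum_le_sum fun x _ => ENNReal.rpow_le_rpow (hdiam n x) hs
      _ = ENNReal.ofReal (Fintype.card (ι n) * r n ^ s) := by
          rw [Finset.sum_const, Finset.card_univ, nsmul_eq_mul,
            ENNReal.ofReal_rpow_of_nonneg (hr0 n) hs, ENNReal.ofReal_mul (Nat.cast_nonneg _),
            ENNReal.ofReal_natCast]
      _ ≤ ENNReal.ofReal C := ENNReal.ofReal_le_ofReal (hcard n)
  have hH : μH[s] S ≤ ENNReal.ofReal C :=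
    (Measure.hausdorffMeasure_le_liminf_sum s S _ hr' U (Eventually.of_forall hdiam)
      (Eventually.of_forall hcover)).trans
      ((liminf_le_liminf (Eventually.of_forall hsum)).trans_eq (liminf_const _))
  exact dimH_le_of_hausdorffMeasure_ne_top (d := s.toNNReal) <| by
    rw [Real.coe_toNNReal _ hs]
    exact ne_top_of_le_ne_top ENNReal.ofReal_ne_top hH

end HausdorffDimension

/-! ### The dimension of the attractor and of the self-affine measure -/

section Dimension

/-- The points of the attractor in the cylinder of the word `w` that lie over the `m`-th interval
of length `q` once the cylinder is blown up to the unit square. -/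
def cylinderSlice {α : Type*} (Pi : (ℕ → α) → ℝ × ℝ) (q : ℝ) {n : ℕ} (w : Fin n → α) (m : ℕ) :
    Set (ℝ × ℝ) :=
  Pi '' {i | wordPrefix n i = w ∧ (Pi (wordShift n i)).1 ∈ Icc (m * q) ((m + 1) * q)}

namespace IsTriangularCoding

variable {N : ℕ} {b c : ℝ} {u v d : Fin N → ℝ} {Pi : (ℕ → Fin N) → ℝ × ℝ}

theorem ediam_cylinderSlice_le (H : IsTriangularCoding b c u v d Pi) {n : ℕ} (w : Fin n → Fin N)
    (m : ℕ) : Metric.ediam (cylinderSlice Pi ((b / c) ^ n) w m) ≤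
      ENNReal.ofReal ((shearBound b c d + 1) * b ^ n) := by
  refine Metric.ediam_le ?_
  rintro _ ⟨i, ⟨hi, hxi⟩, rfl⟩ _ ⟨j, ⟨hj, hxj⟩, rfl⟩
  rw [edist_dist]
  refine ENNReal.ofReal_le_ofReal ?_
  have hij : wordPrefix n i = wordPrefix n j := hi.trans hj.symm
  have hbn := pow_pos H.b_pos n
  have hσ := shearBound_nonneg (d := d) H.b_lt_c
  have hX : c ^ n * |(Pi (wordShift n i)).1 - (Pi (wordShift n j)).1| ≤ b ^ n := by
    rw [mul_comm, ← le_div_iff₀ (pow_pos H.c_pos n), ← div_pow, abs_le]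
    constructor <;> linarith [hxi.1, hxi.2, hxj.1, hxj.2]
  have hY := abs_snd_sub_le_one (H.Pi_mem_unitSq (wordShift n i)) (H.Pi_mem_unitSq (wordShift n j))
  refine max_le ?_ ?_
  · rw [Real.dist_eq, H.Pi_fst_sub hij, abs_mul, abs_of_pos (pow_pos H.c_pos n)]
    exact hX.trans (le_mul_of_one_le_left hbn.le (by linarith))
  · rw [Real.dist_eq, H.Pi_snd_sub hij, add_mul, one_mul]
    refine (abs_add_le _ _).trans (add_le_add ?_ ?_)
    · have hshear := abs_shear_le (d := d) H.b_pos H.b_lt_c (prefixWord i n)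
      rw [length_prefixWord] at hshear
      rw [abs_mul]
      calc _ ≤ shearBound b c d * c ^ n * |(Pi (wordShift n i)).1 - (Pi (wordShift n j)).1| := by
            gcongr
        _ ≤ shearBound b c d * b ^ n := by rw [mul_assoc]; gcongr
    · rw [abs_mul, abs_of_pos hbn]
      exact mul_le_of_le_one_right hbn.le hY

theorem range_Pi_subset_iUnion_cylinderSlice (H : IsTriangularCoding b c u v d Pi) (n : ℕ) :
    range Pi ⊆ ⋃ x : (Fin n → Fin N) × Fin (⌊(c / b) ^ n⌋₊ + 1),
      cylinderSlice Pi ((b / c) ^ n) x.1 x.2 := by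
  rintro _ ⟨i, rfl⟩
  have hx := (H.Pi_mem_unitSq (wordShift n i)).1
  have hq : 0 < (b / c) ^ n := pow_pos (div_pos H.b_pos H.c_pos) n
  have hle : (Pi (wordShift n i)).1 / (b / c) ^ n ≤ (c / b) ^ n := by
    rw [← inv_div b c, inv_pow, ← one_div]
    exact div_le_div_of_nonneg_right hx.2 hq.le
  refine mem_iUnion.2 ⟨(wordPrefix n i, ⟨⌊(Pi (wordShift n i)).1 / (b / c) ^ n⌋₊,
    Nat.lt_succ_of_le (Nat.floor_le_floor hle)⟩), i, ⟨rfl, ?_, ?_⟩, rfl⟩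
  · exact (le_div_iff₀ hq).1 (Nat.floor_le (div_nonneg hx.1 hq.le))
  · exact (div_le_iff₀ hq).1 (Nat.lt_floor_add_one _).le

theorem dimH_range_Pi_le (H : IsTriangularCoding b c u v d Pi) {τ : ℝ} (hτ0 : 0 ≤ τ)
    (hτ : b ^ τ = ((N : ℝ) * c)⁻¹) : dimH (range Pi) ≤ ENNReal.ofReal (1 + τ) := by
  have hb := H.b_pos
  have hc := H.c_pos
  have hσ := shearBound_nonneg (d := d) H.b_lt_c
  have hN : (N : ℝ) ≠ 0 := fun h => by simp [h, (Real.rpow_pos_of_pos hb τ).ne'] at hτ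
  have hlim : Tendsto (fun n : ℕ => (shearBound b c d + 1) * b ^ n) atTop (𝓝 0) := by
    simpa only [mul_zero] using
      (tendsto_pow_atTop_nhds_zero_of_lt_one hb.le H.b_lt_one).const_mul (shearBound b c d + 1)
  refine dimH_le_ofReal_of_forall_cover (C := 2 * (shearBound b c d + 1) ^ (1 + τ))
    (fun n (x : (Fin n → Fin N) × Fin (⌊(c / b) ^ n⌋₊ + 1)) =>
      cylinderSlice Pi ((b / c) ^ n) x.1 x.2) (by linarith) (fun n => by positivity) hlim
    (fun n x => H.ediam_cylinderSlice_le x.1 x.2) H.range_Pi_subset_iUnion_cylinderSlice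
    fun n => ?_
  have hfloor : (⌊(c / b) ^ n⌋₊ : ℝ) + 1 ≤ 2 * (c / b) ^ n := by
    have hcb : 1 ≤ (c / b) ^ n := one_le_pow₀ ((one_le_div hb).2 H.b_lt_c.le)
    linarith [Nat.floor_le (zero_le_one.trans hcb)]
  have hpow : (b ^ n) ^ (1 + τ) = b ^ n * (((N : ℝ) * c) ^ n)⁻¹ := by
    rw [Real.rpow_one_add' (pow_pos hb n).le (by linarith), ← Real.rpow_pow_comm hb.le, hτ, inv_pow]
  calc (Fintype.card ((Fin n → Fin N) × Fin (⌊(c / b) ^ n⌋₊ + 1)) : ℝ) *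
        ((shearBound b c d + 1) * b ^ n) ^ (1 + τ)
      = (N : ℝ) ^ n * (⌊(c / b) ^ n⌋₊ + 1) * ((shearBound b c d + 1) * b ^ n) ^ (1 + τ) := by
        simp
    _ ≤ (N : ℝ) ^ n * (2 * (c / b) ^ n) * ((shearBound b c d + 1) * b ^ n) ^ (1 + τ) := by
        gcongr
    _ = 2 * (shearBound b c d + 1) ^ (1 + τ) := by
        rw [Real.mul_rpow (by linarith) (pow_pos hb n).le, hpow, mul_pow, div_pow]
        field_simp

end IsTriangularCoding

theorem mul_measureReal_setOf_le_measure_slice_le {X Y : Type*} [MeasurableSpace X]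
    [MeasurableSpace Y] {μ : Measure X} {ν : Measure Y} [IsFiniteMeasure μ] [IsFiniteMeasure ν]
    {E : Set (X × Y)} (hE : MeasurableSet E) {a : ℝ} (ha : 0 ≤ a) :
    a * μ.real {x | ENNReal.ofReal a ≤ ν (Prod.mk x ⁻¹' E)} ≤ (μ.prod ν).real E := by
  have hmarkov := mul_meas_ge_le_lintegral (μ := μ)
    (measurable_measure_prodMk_left (ν := ν) hE) (ENNReal.ofReal a)
  rw [← Measure.prod_apply hE] at hmarkov
  simpa only [ENNReal.toReal_mul, ENNReal.toReal_ofReal ha, measureReal_def] using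
    ENNReal.toReal_mono (measure_ne_top _ _) hmarkov

theorem measurableSet_closePairs {X : Type*} [MeasurableSpace X] {Pi : X → ℝ × ℝ}
    (hPi : Measurable Pi) {G : Set X} (hG : MeasurableSet G) (ρ r : ℝ) :
    MeasurableSet (closePairs Pi G ρ r) := by
  have hfst : Measurable fun x : X × X => Pi x.1 := hPi.comp measurable_fst
  have hsnd : Measurable fun x : X × X => Pi x.2 := hPi.comp measurable_snd
  exact (measurable_fst hG).inter
    ((measurableSet_le (hfst.fst.sub hsnd.fst).abs measurable_const).inter
      (measurableSet_le (hfst.snd.sub hsnd.snd).abs measurable_const))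

theorem ae_eventually_measure_closedBall_le {X : Type*} [MeasurableSpace X] {μ : Measure X}
    [IsFiniteMeasure μ] {Pi : X → ℝ × ℝ} (hPi : Measurable Pi) {G : ℕ → Set X}
    (hGmeas : ∀ n, MeasurableSet (G n)) (hG : ∀ᵐ x ∂μ, ∀ᶠ n in atTop, x ∈ G n)
    {r a g : ℕ → ℝ} (ha : ∀ n, 0 < a n) (hg : Summable g)
    (hclose : ∀ n, (μ.prod μ).real (closePairs Pi (G n) (r n) (r n)) ≤ a n * g n) :
    ∀ᵐ x ∂μ, ∀ᶠ n in atTop,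
      μ.map Pi (Metric.closedBall (Pi x) (r n)) ≤ ENNReal.ofReal (a n) := by
  let E (n : ℕ) := closePairs Pi (G n) (r n) (r n)
  have hE (n : ℕ) : MeasurableSet (E n) := measurableSet_closePairs hPi (hGmeas n) _ _
  have hbad (n : ℕ) : μ.real {x | ENNReal.ofReal (a n) ≤ μ (Prod.mk x ⁻¹' E n)} ≤ g n :=
    le_of_mul_le_mul_left ((mul_measureReal_setOf_le_measure_slice_le (hE n) (ha n).le).trans
      (hclose n)) (ha n)
  filter_upwards [ae_eventually_notMem_of_measureReal_le hg (Eventually.of_forall hbad), hG]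
    with x hxbad hxG
  filter_upwards [hxbad, hxG] with n hnbad hnG
  rw [Measure.map_apply hPi Metric.isClosed_closedBall.measurableSet]
  refine (measure_mono fun y hy => ?_).trans (not_le.1 hnbad).le
  rw [mem_preimage, Metric.mem_closedBall, dist_comm, Prod.dist_eq, max_le_iff] at hy
  exact ⟨hnG, hy⟩

theorem HasLqDensity.nullSingletonClass {m : Measure ℝ} {q : ℝ} (h : HasLqDensity m q) :
    NullSingletonClass m := by
  obtain ⟨φ, rfl, -⟩ := h
  infer_instance

namespace IsTriangularCoding

variable {N : ℕ} {b c : ℝ} {u v d : Fin N → ℝ} {Pi : (ℕ → Fin N) → ℝ × ℝ}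
  {μ : Measure (ℕ → Fin N)}

theorem exists_word_forall_hasTransferBound (H : IsTriangularCoding b c u v d Pi)
    (hμ : IsUniformBernoulli N μ) (hNc : 1 < N * c)
    (hdens : ∀ q > (1 : ℝ), HasLqDensity (μ.map fun i => (Pi i).1) q)
    (htrans : Transversality N c b u v d) :
    ∃ p, 0 < p ∧ ∃ w : Fin p → Fin N, ∀ θ ∈ Ioo (0 : ℝ) 1, ∃ C K, 0 ≤ K ∧
      IsFrostman (μ.map fun i => (Pi i).1) C θ ∧ HasTransferBound b c d Pi μ w K θ := by
  have := hμ.1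
  obtain ⟨c₃, hc₃, hov⟩ := htrans.exists_hasOverlapBound H.mapsTo
  obtain ⟨z, hz⟩ := H.exists_Pi_mem_interior hNc hov (hdens 2 one_lt_two).nullSingletonClass
  obtain ⟨p, hp, w, hw⟩ := H.exists_isInnerWord hz
  refine ⟨p, hp, w, fun θ hθ => ?_⟩
  have hq : 1 < 1 / (1 - θ) := (one_lt_div (sub_pos.2 hθ.2)).2 (by linarith [hθ.1])
  obtain ⟨C, hC⟩ := (hdens _ hq).exists_isFrostman hq
  rw [one_div_one_div, sub_sub_cancel] at hC
  exact ⟨C, _, by positivity, hC, H.hasTransferBound hμ hc₃ hov hθ.2.le hC hp hw⟩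

theorem exists_measureReal_closePairs_floor_le (H : IsTriangularCoding b c u v d Pi)
    (hμ : IsUniformBernoulli N μ) {p : ℕ} {w : Fin p → Fin N} {C K θ : ℝ} (hK : 0 ≤ K)
    (hθ1 : θ ≤ 1) (hFrost : IsFrostman (μ.map fun i => (Pi i).1) C θ)
    (hT : HasTransferBound b c d Pi μ w K θ) {γ : ℝ} (hγ0 : 0 ≤ γ) (hγ : γ < 2 * θ)
    {τ s : ℝ} (hτ : b ^ τ = ((N : ℝ) * c)⁻¹) (hs2 : s ≤ 2) (hsτ : s ≤ 1 + τ)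
    {δ : ℝ} (hδ : 0 < δ) :
    ∃ ζ : ℝ, 0 < ζ ∧ ∃ M, ∀ n : ℕ,
      (μ.prod μ).real (closePairs Pi (recurrentWords w ⌊ζ * n⌋₊ n) (b ^ n) (b ^ n)) ≤
        M * (n + 1) * (b ^ n) ^ (s + γ - 2 - δ) := by
  obtain ⟨M, hM, R, hR, hbound⟩ :=
    H.exists_measureReal_closePairs_le hμ hK hθ1 hFrost hT hγ0 hγ hτ hs2 hsτ
  have hb := H.b_pos
  have hR0 : 0 < R := by linarith
  have hlim : Tendsto (fun ζ : ℝ => R ^ ζ) (𝓝[>] 0) (𝓝 1) := by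
    simpa using (Real.continuousAt_const_rpow (b := 0) hR0.ne').tendsto.mono_left
      nhdsWithin_le_nhds
  obtain ⟨ζ, hRζ, hζ0, hζ1⟩ := ((hlim.eventually_lt_const
    (Real.one_lt_rpow_of_pos_of_lt_one_of_neg hb H.b_lt_one (neg_lt_zero.2 hδ))).and
    (Ioc_mem_nhdsGT one_pos)).exists
  refine ⟨ζ, hζ0, M, fun n => ?_⟩
  have hζn : 0 ≤ ζ * n := by positivity
  have hpow : R ^ ⌊ζ * n⌋₊ ≤ (b ^ n) ^ (-δ) :=
    calc R ^ ⌊ζ * n⌋₊ = R ^ (⌊ζ * n⌋₊ : ℝ) := (Real.rpow_natCast _ _).symm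
      _ ≤ R ^ (ζ * n) := Real.rpow_le_rpow_of_exponent_le hR (Nat.floor_le hζn)
      _ = (R ^ ζ) ^ n := Real.rpow_mul_natCast hR0.le _ _
      _ ≤ (b ^ (-δ)) ^ n := by gcongr
      _ = (b ^ n) ^ (-δ) := Real.rpow_pow_comm hb.le _ _
  have hfloor : ⌊ζ * n⌋₊ ≤ n := Nat.floor_le_of_le (mul_le_of_le_one_left n.cast_nonneg hζ1)
  calc _ ≤ M * (n + 1) * R ^ ⌊ζ * n⌋₊ * (b ^ n) ^ (s + γ - 2) := hbound _ n hfloor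
    _ ≤ M * (n + 1) * (b ^ n) ^ (-δ) * (b ^ n) ^ (s + γ - 2) := by gcongr
    _ = M * (n + 1) * (b ^ n) ^ (s + γ - 2 - δ) := by
        rw [mul_assoc, ← Real.rpow_add (pow_pos hb n)]
        ring_nf

theorem ae_eventually_measure_closedBall_Pi_le (H : IsTriangularCoding b c u v d Pi)
    (hμ : IsUniformBernoulli N μ) (hNc : 1 < N * c)
    (hdens : ∀ q > (1 : ℝ), HasLqDensity (μ.map fun i => (Pi i).1) q)
    (htrans : Transversality N c b u v d) {τ s t : ℝ} (hτ : b ^ τ = ((N : ℝ) * c)⁻¹)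
    (hs2 : s ≤ 2) (hsτ : s ≤ 1 + τ) (ht0 : 0 ≤ t) (hts : t < s) :
    ∀ᵐ i ∂μ, ∀ᶠ n : ℕ in atTop,
      μ.map Pi (Metric.closedBall (Pi i) (b ^ n)) ≤ ENNReal.ofReal ((b ^ n) ^ t) := by
  have := hμ.1
  have hb := H.b_pos
  obtain ⟨p, hp, w, hw⟩ := H.exists_word_forall_hasTransferBound hμ hNc hdens htrans
  set ε := s - t with hε
  obtain ⟨C, K, hK, hFrost, hT⟩ := hw (1 - ε / 8) ⟨by linarith, by linarith⟩
  obtain ⟨ζ, hζ, M, hM⟩ := H.exists_measureReal_closePairs_floor_le hμ hK (by linarith) hFrost hT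
    (γ := 2 - ε / 2) (by linarith) (by linarith) hτ hs2 hsτ (δ := ε / 4) (by linarith)
  have hsum : Summable fun n : ℕ => M * (((n : ℝ) + 1) * (b ^ (ε / 4)) ^ n) :=
    (summable_succ_mul_geometric (by positivity)
      (Real.rpow_lt_one hb.le H.b_lt_one (by linarith))).mul_left M
  refine ae_eventually_measure_closedBall_le H.continuous_Pi.measurable
    (fun n => measurableSet_recurrentWords w _ n) (hμ.ae_eventually_mem_recurrentWords hp w hζ)
    (fun n => by positivity) hsum fun n => (hM n).trans_eq ?_
  have hexp : s + (2 - ε / 2) - 2 - ε / 4 = t + ε / 4 := by rw [hε]; ring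
  rw [hexp, Real.rpow_add (pow_pos hb n), ← Real.rpow_pow_comm hb.le (ε / 4)]
  ring

theorem ofReal_le_dimH_of_measure_compl_eq_zero (H : IsTriangularCoding b c u v d Pi)
    (hμ : IsUniformBernoulli N μ) (hNc : 1 < N * c)
    (hdens : ∀ q > (1 : ℝ), HasLqDensity (μ.map fun i => (Pi i).1) q)
    (htrans : Transversality N c b u v d) {τ s : ℝ} (hτ : b ^ τ = ((N : ℝ) * c)⁻¹)
    (hs2 : s ≤ 2) (hsτ : s ≤ 1 + τ) {A : Set (ℝ × ℝ)} (hA : μ.map Pi Aᶜ = 0) :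
    ENNReal.ofReal s ≤ dimH A := by
  have := hμ.1
  refine le_of_tendsto (x := 𝓝[<] s)
    ((ENNReal.continuous_ofReal.tendsto s).mono_left nhdsWithin_le_nhds) ?_
  filter_upwards [self_mem_nhdsWithin] with t hts
  rcases le_or_gt t 0 with ht | ht
  · rw [ENNReal.ofReal_of_nonpos ht]
    exact zero_le
  · have hae := H.ae_eventually_measure_closedBall_Pi_le hμ hNc hdens htrans hτ hs2 hsτ ht.le hts
    refine ofReal_le_dimH_of_frequently_measure_closedBall_le H.b_pos H.b_lt_one ht hA
      fun hnot => ?_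
    obtain ⟨i, hi, hi'⟩ :=
      (hae.and (ae_of_ae_map H.continuous_Pi.aemeasurable hnot)).exists
    exact hi' hi

theorem map_Pi_compl_range (H : IsTriangularCoding b c u v d Pi) (μ : Measure (ℕ → Fin N)) :
    μ.map Pi (range Pi)ᶜ = 0 := by
  have hmeas := (isCompact_range H.continuous_Pi).measurableSet
  rw [Measure.map_apply H.continuous_Pi.measurable hmeas.compl, preimage_compl, preimage_range,
    compl_univ, measure_empty]

end IsTriangularCoding

theorem rpow_log_div_neg_log {b x : ℝ} (hb0 : 0 < b) (hb1 : b < 1) (hx : 0 < x) :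
    b ^ (Real.log x / -Real.log b) = x⁻¹ := by
  rw [div_neg, Real.log_div_log, Real.rpow_neg hb0.le, Real.rpow_logb hb0 hb1.ne hx]

end Dimension

/-- under Assumption B, `dim_H Λ = dim_H ν = min(2, 1 + log(Nc)/(-log b))`. -/
theorem statement4 (N : ℕ) (hN : 2 ≤ N) (b c : ℝ)
    (hb0 : 0 < b) (hb1 : b < 1) (hc0 : 0 < c) (hc1 : c < 1)
    (u v d : Fin N → ℝ)
    (hmaps : ∀ i, Smap c b u v d i '' unitSq ⊆ unitSq)
    (Pi : (ℕ → Fin N) → ℝ × ℝ)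
    (hPi : ∀ i, Tendsto (fun n => Sword c b u v d (prefixWord i n) 0) atTop (nhds (Pi i)))
    (μ : Measure (ℕ → Fin N)) (hμ : IsUniformBernoulli N μ)
    (ν : Measure (ℝ × ℝ)) (hν : ν = μ.map Pi)
    (νx : Measure ℝ) (hνx : νx = ν.map Prod.fst)
    (hB1 : 1 / (N : ℝ) < c) (hB2 : b < c)
    (hB3 : ∀ q > (1 : ℝ), HasLqDensity νx q)
    (hB4 : Transversality N c b u v d) :
    dimH (Set.range Pi) =
      ENNReal.ofReal (min 2 (1 + Real.log ((N : ℝ) * c) / (-Real.log b))) ∧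
    measureDimH ν =
      ENNReal.ofReal (min 2 (1 + Real.log ((N : ℝ) * c) / (-Real.log b))) := by
  subst hν hνx
  have hNc : 1 < N * c := (div_lt_iff₀' (by positivity)).1 hB1
  have H : IsTriangularCoding b c u v d Pi := ⟨hb0, hB2, hc1, hmaps, hPi⟩
  rw [Measure.map_map measurable_fst H.continuous_Pi.measurable] at hB3
  set τ := Real.log (N * c) / (-Real.log b)
  have hτ : b ^ τ = (N * c)⁻¹ := rpow_log_div_neg_log hb0 hb1 (zero_lt_one.trans hNc)
  have hτ0 : 0 ≤ τ := div_nonneg (Real.log_pos hNc).le (neg_nonneg.2 (Real.log_neg hb0 hb1).le)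
  have hlower (A : Set (ℝ × ℝ)) (hA : μ.map Pi Aᶜ = 0) :
      ENNReal.ofReal (min 2 (1 + τ)) ≤ dimH A :=
    H.ofReal_le_dimH_of_measure_compl_eq_zero hμ hNc hB3 hB4 hτ (min_le_left _ _)
      (min_le_right _ _) hA
  have hplane : dimH (range Pi) ≤ ENNReal.ofReal 2 :=
    (dimH_mono (subset_univ _)).trans_eq (by simp [Real.dimH_univ_eq_finrank (ℝ × ℝ)])
  have hupper : dimH (range Pi) ≤ ENNReal.ofReal (min 2 (1 + τ)) := by
    rw [ENNReal.ofReal_min]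
    exact le_min hplane (H.dimH_range_Pi_le hτ0 hτ)
  have hfull := H.map_Pi_compl_range μ
  exact ⟨le_antisymm hupper (hlower _ hfull),
    le_antisymm ((iInf₂_le (range Pi) hfull).trans hupper) (le_iInf₂ hlower)⟩

end
end

section
/- Assume ν_x is absolutely continuous with an L^q density for every q > 1. Then for every K > 0 and every q > 1 there exists a constant C = C(K,q) such that for every ℓ > 0, every interval I of length K·c^ℓ intersects at most C·(Nc)^ℓ·c^{−ℓ/q} of the intervals h_τ([0,1]) with τ a word of length ℓ. -/
open MeasureTheory Filter Set Topology
open scoped ENNReal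

noncomputable section

/-- Composition of the maps `hᵢ(x) = c x + uᵢ` along a finite word:
`hword [i₁,…,iₙ] = h_{i₁} ∘ ⋯ ∘ h_{iₙ}`. -/
def hword {N : ℕ} (c : ℝ) (u : Fin N → ℝ) : List (Fin N) → ℝ → ℝ
  | [] => id
  | i :: w => fun x => c * hword c u w x + u i

/-!
Put `δ = c ^ ℓ`. By Hölder's inequality a measure `ν` with an `L^q` density satisfies
`ν(J) ≤ A |J|^(1 - 1/q)` for every set `J`. If `h_τ([0,1])` meets an interval `I` of length `K δ`,
then, its own length being `δ`, it lies in the closed `δ`-neighbourhood `J` of `I`, so all infinite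
words starting with `τ` are coded into `J`. These cylinders are disjoint and have mass `N ^ (-ℓ)`
each, so the number of such `τ` is at most `N^ℓ ν(J) ≤ A N^ℓ ((K + 2) δ)^(1 - 1/q)`.
-/

open scoped NNReal

/-- The word formed by the first `n` letters of an infinite word, as a function on `Fin n`. Its
fibres are the cylinders of length `n`. -/
def initialWord {α : Type*} (n : ℕ) (i : ℕ → α) : Fin n → α := fun k => i k

/-- The words `τ` of length `n` whose cylinder set `h_τ(s)` meets `t`. -/
def hittingWords {N : ℕ} (c : ℝ) (u : Fin N → ℝ) (s t : Set ℝ) (n : ℕ) : Set (Fin n → Fin N) :=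
  {τ | (hword c u (List.ofFn τ) '' s ∩ t).Nonempty}

lemma prefixWord_eq_ofFn_initialWord {N : ℕ} (i : ℕ → Fin N) (n : ℕ) :
    prefixWord i n = List.ofFn (initialWord n i) :=
  rfl

lemma prefixWord_add {N : ℕ} (i : ℕ → Fin N) (m n : ℕ) :
    prefixWord i (m + n) = prefixWord i m ++ prefixWord (fun k => i (m + k)) n := by
  simp [prefixWord, List.ofFn_add]

lemma measurable_initialWord {α : Type*} [MeasurableSpace α] (n : ℕ) :
    Measurable (initialWord n : (ℕ → α) → Fin n → α) :=
  measurable_pi_lambda _ fun k => measurable_pi_apply (k : ℕ)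

lemma volume_cthickening_Icc {a b δ : ℝ} (hab : a ≤ b) (hδ : 0 ≤ δ) :
    volume (Metric.cthickening δ (Icc a b)) = ENNReal.ofReal (b - a + 2 * δ) := by
  rw [Real.Icc_eq_closedBall, cthickening_closedBall hδ (by linarith), Real.volume_closedBall]
  congr 1
  ring

lemma setLIntegral_le_rpow_mul_measure_rpow {α : Type*} [MeasurableSpace α] (μ : Measure α)
    {q : ℝ} (hq : 1 < q) (f : α → ℝ≥0∞) (s : Set α) :
    ∫⁻ t in s, f t ∂μ ≤ (∫⁻ t, f t ^ q ∂μ) ^ (1 / q) * μ s ^ (1 - 1 / q) := by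
  -- Hölder's inequality needs a measurable function, and `f` need not be one.
  obtain ⟨g, hg, hgf, hfg⟩ := exists_measurable_le_lintegral_eq (μ.restrict s) f
  have hconj : q.HolderConjugate q.conjExponent := .conjExponent hq
  have hexp : 1 / q.conjExponent = 1 - 1 / q := by
    simpa only [one_div] using hconj.one_sub_inv.symm
  calc ∫⁻ t in s, f t ∂μ
      = ∫⁻ t in s, (g * 1) t ∂μ := by rw [hfg, mul_one]
    _ ≤ (∫⁻ t in s, g t ^ q ∂μ) ^ (1 / q) *
          (∫⁻ _ in s, (1 : ℝ≥0∞) ^ q.conjExponent ∂μ) ^ (1 / q.conjExponent) :=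
        ENNReal.lintegral_mul_le_Lp_mul_Lq _ hconj hg.aemeasurable aemeasurable_one
    _ = (∫⁻ t in s, g t ^ q ∂μ) ^ (1 / q) * μ s ^ (1 - 1 / q) := by
        rw [ENNReal.one_rpow, setLIntegral_one, hexp]
    _ ≤ (∫⁻ t, f t ^ q ∂μ) ^ (1 / q) * μ s ^ (1 - 1 / q) := by
        gcongr
        · exact Measure.restrict_le_self
        · exact hgf _

lemma HasLqDensity.exists_measure_le_mul_volume_rpow {m : Measure ℝ} {q : ℝ}
    (hm : HasLqDensity m q) (hq : 1 < q) :
    ∃ A : ℝ≥0, 0 < A ∧ ∀ s, m s ≤ A * volume s ^ (1 - 1 / q) := by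
  obtain ⟨φ, rfl, hφ⟩ := hm
  lift (∫⁻ t, φ t ^ q) ^ (1 / q) to ℝ≥0 using
    ENNReal.rpow_ne_top_of_nonneg (by positivity) hφ.ne with A hA
  refine ⟨A + 1, by positivity, fun s => ?_⟩
  calc volume.withDensity φ s
      ≤ A * volume s ^ (1 - 1 / q) := by
        rw [withDensity_apply', hA]
        exact setLIntegral_le_rpow_mul_measure_rpow volume hq φ s
    _ ≤ (A + 1 : ℝ≥0) * volume s ^ (1 - 1 / q) := by
        gcongr
        exact le_self_add

namespace IsUniformBernoulli

variable {N : ℕ} {μ : Measure (ℕ → Fin N)}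

lemma alphabet_card_pos (hμ : IsUniformBernoulli N μ) : 0 < N := by
  have := hμ.1
  obtain ⟨i⟩ := μ.nonempty_of_neZero
  exact (i 0).pos

lemma measure_initialWord_preimage (hμ : IsUniformBernoulli N μ) {n : ℕ}
    (S : Set (Fin n → Fin N)) :
    μ (initialWord n ⁻¹' S) = Nat.card S / (N : ℝ≥0∞) ^ n := by
  classical
  have hfibre (τ : Fin n → Fin N) : μ (initialWord n ⁻¹' {τ}) = ((N : ℝ≥0∞) ^ n)⁻¹ := by
    rw [ENNReal.inv_pow, ← one_div, ← hμ.2 n τ]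
    congr 1
    ext i
    exact funext_iff
  calc μ (initialWord n ⁻¹' S)
      = ∑ τ ∈ S.toFinset, μ (initialWord n ⁻¹' {τ}) := by
        rw [sum_measure_preimage_singleton _
          fun τ _ => measurable_initialWord n (measurableSet_singleton τ), coe_toFinset]
    _ = Nat.card S / (N : ℝ≥0∞) ^ n := by
        simp only [hfibre, Finset.sum_const, nsmul_eq_mul, toFinset_card, Nat.card_eq_fintype_card,
          div_eq_mul_inv]

end IsUniformBernoulli

section SelfSimilar

variable {N : ℕ} {c : ℝ} {u : Fin N → ℝ}

lemma hword_append (w v : List (Fin N)) (x : ℝ) :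
    hword c u (w ++ v) x = hword c u w (hword c u v x) := by
  induction w with
  | nil => rfl
  | cons i w ih => simp only [List.cons_append, hword, ih]

lemma dist_hword_hword (w : List (Fin N)) (x y : ℝ) :
    dist (hword c u w x) (hword c u w y) = |c| ^ w.length * dist x y := by
  induction w with
  | nil => simp [hword]
  | cons i w ih =>
    simp only [hword, dist_add_right, List.length_cons, pow_succ']
    rw [mul_assoc, ← ih, Real.dist_eq, Real.dist_eq, ← mul_sub, abs_mul]

lemma mapsTo_hword {s : Set ℝ} (hs : ∀ i, MapsTo (fun x => c * x + u i) s s)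
    (w : List (Fin N)) : MapsTo (hword c u w) s s := by
  induction w with
  | nil => exact mapsTo_id s
  | cons i w ih => exact (hs i).comp ih

variable {s : Set ℝ} {x₀ : ℝ}

lemma dist_hword_prefixWord_le_of_tendsto (hs : ∀ i, MapsTo (fun x => c * x + u i) s s)
    (hbdd : Bornology.IsBounded s) (hx₀ : x₀ ∈ s) {i : ℕ → Fin N} {p : ℝ}
    (hp : Tendsto (fun n => hword c u (prefixWord i n) x₀) atTop (𝓝 p))
    (n : ℕ) {y : ℝ} (hy : y ∈ s) :
    dist p (hword c u (prefixWord i n) y) ≤ |c| ^ n * Metric.diam s := by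
  have htail : Tendsto (fun m => hword c u (prefixWord i (n + m)) x₀) atTop (𝓝 p) := by
    simpa only [add_comm n] using (tendsto_add_atTop_iff_nat n).2 hp
  refine le_of_tendsto (htail.dist tendsto_const_nhds) (.of_forall fun m => ?_)
  rw [prefixWord_add, hword_append, dist_hword_hword, prefixWord, List.length_ofFn]
  gcongr
  exact Metric.dist_le_diam_of_mem hbdd (mapsTo_hword hs _ hx₀) hy

variable {π : (ℕ → Fin N) → ℝ}

lemma measurable_of_tendsto_hword_prefixWord
    (hπ : ∀ i, Tendsto (fun n => hword c u (prefixWord i n) x₀) atTop (𝓝 (π i))) :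
    Measurable π := by
  refine measurable_of_tendsto_metrizable (fun n => ?_) (tendsto_pi_nhds.2 hπ)
  simp only [prefixWord_eq_ofFn_initialWord]
  have hword_measurable : Measurable fun τ : Fin n → Fin N => hword c u (List.ofFn τ) x₀ :=
    measurable_of_countable _
  exact hword_measurable.comp (measurable_initialWord n)

lemma initialWord_preimage_hittingWords_subset
    (hπ : ∀ i, Tendsto (fun n => hword c u (prefixWord i n) x₀) atTop (𝓝 (π i)))
    (hs : ∀ i, MapsTo (fun x => c * x + u i) s s) (hbdd : Bornology.IsBounded s) (hx₀ : x₀ ∈ s)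
    (t : Set ℝ) (n : ℕ) :
    initialWord n ⁻¹' hittingWords c u s t n ⊆
      π ⁻¹' Metric.cthickening (|c| ^ n * Metric.diam s) t := by
  rintro i ⟨_, ⟨y, hy, rfl⟩, hyt⟩
  rw [← prefixWord_eq_ofFn_initialWord] at hyt
  exact Metric.mem_cthickening_of_dist_le _ _ _ _ hyt
    (dist_hword_prefixWord_le_of_tendsto hs hbdd hx₀ (hπ i) n hy)

lemma card_hittingWords_div_le
    (hπ : ∀ i, Tendsto (fun n => hword c u (prefixWord i n) x₀) atTop (𝓝 (π i)))
    (hs : ∀ i, MapsTo (fun x => c * x + u i) s s)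
    (hbdd : Bornology.IsBounded s) (hx₀ : x₀ ∈ s)
    {μ : Measure (ℕ → Fin N)} (hμ : IsUniformBernoulli N μ) (t : Set ℝ) (n : ℕ) :
    Nat.card (hittingWords c u s t n) / (N : ℝ≥0∞) ^ n ≤
      μ.map π (Metric.cthickening (|c| ^ n * Metric.diam s) t) := by
  rw [← hμ.measure_initialWord_preimage]
  exact (measure_mono (initialWord_preimage_hittingWords_subset hπ hs hbdd hx₀ t n)).trans
    (Measure.le_map_apply (measurable_of_tendsto_hword_prefixWord hπ).aemeasurable _)

lemma card_hittingWords_Icc_le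
    (hπ : ∀ i, Tendsto (fun n => hword c u (prefixWord i n) x₀) atTop (𝓝 (π i)))
    (hs : ∀ i, MapsTo (fun x => c * x + u i) s s)
    (hbdd : Bornology.IsBounded s) (hx₀ : x₀ ∈ s)
    {μ : Measure (ℕ → Fin N)} (hμ : IsUniformBernoulli N μ) {A : ℝ≥0} {r : ℝ} (hr : 0 ≤ r)
    (hA : ∀ t, μ.map π t ≤ A * volume t ^ r) {a b : ℝ} (hab : a ≤ b) (n : ℕ) :
    (Nat.card (hittingWords c u s (Icc a b) n) : ℝ) ≤
      N ^ n * (A * (b - a + 2 * (|c| ^ n * Metric.diam s)) ^ r) := by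
  have hδ : 0 ≤ |c| ^ n * Metric.diam s := by positivity
  have hlen : 0 ≤ b - a + 2 * (|c| ^ n * Metric.diam s) := by linarith
  have hN : (0 : ℝ) < N := mod_cast hμ.alphabet_card_pos
  have hcard : (Nat.card (hittingWords c u s (Icc a b) n) / (N : ℝ≥0∞) ^ n) ≤
      ENNReal.ofReal (A * (b - a + 2 * (|c| ^ n * Metric.diam s)) ^ r) := by
    rw [ENNReal.ofReal_mul A.coe_nonneg, ENNReal.ofReal_coe_nnreal,
      ← ENNReal.ofReal_rpow_of_nonneg hlen hr, ← volume_cthickening_Icc hab hδ]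
    exact (card_hittingWords_div_le hπ hs hbdd hx₀ hμ _ n).trans (hA _)
  rw [← div_le_iff₀' (by positivity)]
  simpa using ENNReal.toReal_le_of_le_ofReal (by positivity) hcard

end SelfSimilar

lemma mul_pow_rpow_one_sub_one_div {M c : ℝ} (hM : 0 ≤ M) (hc : 0 < c) (n : ℕ) (q : ℝ) :
    (M * c ^ n) ^ (1 - 1 / q) = M ^ (1 - 1 / q) * (c ^ n * c ^ (-(n : ℝ) / q)) := by
  rw [Real.mul_rpow hM (by positivity), ← Real.rpow_natCast, ← Real.rpow_mul hc.le,
    ← Real.rpow_add hc]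
  ring_nf

theorem statement19_general {N : ℕ} {c : ℝ} (hc : 0 < c) {u : Fin N → ℝ}
    (hmaps : ∀ i, (fun x => c * x + u i) '' Icc (0 : ℝ) 1 ⊆ Icc (0 : ℝ) 1)
    {π : (ℕ → Fin N) → ℝ}
    (hπ : ∀ i, Tendsto (fun n => hword c u (prefixWord i n) 0) atTop (𝓝 (π i)))
    {μ : Measure (ℕ → Fin N)} (hμ : IsUniformBernoulli N μ)
    {q : ℝ} (hq : 1 < q) (hLq : HasLqDensity (μ.map π) q) {K : ℝ} (hK : 0 ≤ K) :
    ∃ C > (0 : ℝ), ∀ (ℓ : ℕ) (x : ℝ),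
      (Nat.card {τ : Fin ℓ → Fin N //
          (hword c u (List.ofFn τ) '' Icc (0 : ℝ) 1 ∩ Icc x (x + K * c ^ ℓ)).Nonempty} : ℝ) ≤
        C * ((N : ℝ) * c) ^ ℓ * c ^ (-(ℓ : ℝ) / q) := by
  obtain ⟨A, hA, hνA⟩ := hLq.exists_measure_le_mul_volume_rpow hq
  have hr : 0 ≤ 1 - 1 / q := by simpa using inv_le_one_of_one_le₀ hq.le
  refine ⟨A * (K + 2) ^ (1 - 1 / q), by positivity, fun ℓ x => ?_⟩
  have hlen : x + K * c ^ ℓ - x + 2 * (|c| ^ ℓ * Metric.diam (Icc (0 : ℝ) 1)) =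
      (K + 2) * c ^ ℓ := by
    rw [abs_of_pos hc, Real.diam_Icc zero_le_one]
    ring
  calc (Nat.card (hittingWords c u (Icc 0 1) (Icc x (x + K * c ^ ℓ)) ℓ) : ℝ)
      ≤ N ^ ℓ * (A * ((K + 2) * c ^ ℓ) ^ (1 - 1 / q)) := by
        rw [← hlen]
        exact card_hittingWords_Icc_le hπ (fun i => mapsTo_iff_image_subset.2 (hmaps i))
          (Metric.isBounded_Icc 0 1) (left_mem_Icc.2 zero_le_one) hμ hr hνA
          (le_add_of_nonneg_right (by positivity)) ℓ
    _ = A * (K + 2) ^ (1 - 1 / q) * (N * c) ^ ℓ * c ^ (-(ℓ : ℝ) / q) := by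
        rw [mul_pow_rpow_one_sub_one_div (by positivity) hc, mul_pow]
        ring

/-- if `ν_x` has an `L^q` density for every `q > 1`, then for all `K > 0`
and `q > 1` there is `C = C(K,q)` such that every interval of length `K c^ℓ` intersects
at most `C (Nc)^ℓ c^{-ℓ/q}` of the level-`ℓ` cylinder intervals `h_τ([0,1])`. -/
theorem statement19 (N : ℕ) (hN : 2 ≤ N) (c : ℝ) (hc0 : 0 < c) (hc1 : c < 1)
    (u : Fin N → ℝ)
    (hmaps : ∀ i, (fun x => c * x + u i) '' Set.Icc (0 : ℝ) 1 ⊆ Set.Icc (0 : ℝ) 1)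
    (PiH : (ℕ → Fin N) → ℝ)
    (hPiH : ∀ i, Tendsto (fun n => hword c u (prefixWord i n) 0) atTop (nhds (PiH i)))
    (μ : Measure (ℕ → Fin N)) (hμ : IsUniformBernoulli N μ)
    (νx : Measure ℝ) (hνx : νx = μ.map PiH)
    (hLq : ∀ q > (1 : ℝ), HasLqDensity νx q) :
    ∀ K > (0 : ℝ), ∀ q > (1 : ℝ), ∃ C > (0 : ℝ), ∀ ℓ : ℕ, 1 ≤ ℓ → ∀ x : ℝ,
      (Nat.card {τ : Fin ℓ → Fin N //
          (hword c u (List.ofFn τ) '' Set.Icc (0 : ℝ) 1 ∩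
            Set.Icc x (x + K * c ^ ℓ)).Nonempty} : ℝ) ≤
        C * ((N : ℝ) * c) ^ ℓ * c ^ (-(ℓ : ℝ) / q) := by
  intro K hK q hq
  subst hνx
  obtain ⟨C, hC, hbound⟩ := statement19_general hc0 hmaps hPiH hμ hq (hLq q hq) hK.le
  exact ⟨C, hC, fun ℓ _ => hbound ℓ⟩

end
end
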